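/- Let V be a PVAS of dimension d with edge set E whose reachability relation →_V* ⊆ ℕ^d × ℕ^d is semilinear. Then →_V* is flattable with respect to V: there exist finitely many words w₁,…,w_r ∈ E* such that →_V* = →_{w₁}* ∘ … ∘ →_{w_r}*. -/

import Mathlib

/-- Vectors of naturals of dimension `d`. -/
abbrev NVec (d : ℕ) := Fin d → ℕ

/-- A priority vector addition system (PVAS) of dimension `d`: a finite set of edges,
each edge having an update vector in `ℤ^d` and a test level `g(e) ∈ {0,…,d}`. -/
structure PVAS (d : ℕ) where
  E : Type
  fintypeE : Fintype E
  upd : E → Fin d → ℤ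
  test : E → ℕ
  test_le : ∀ e, test e ≤ d

namespace PVAS

variable {d : ℕ} (V : PVAS d)

/-- The step relation induced by an edge `e`: `x →_e x'` iff the first `test e`
counters of `x` are `0` and `x' = x + upd e` (which must stay in `ℕ^d`). -/
def StepE (e : V.E) (x x' : NVec d) : Prop :=
  (∀ j : Fin d, (j : ℕ) < V.test e → x j = 0) ∧
    ∀ i : Fin d, (x' i : ℤ) = (x i : ℤ) + V.upd e i

/-- The one-step relation: union of the `→_e`. -/
def Step (x x' : NVec d) : Prop := ∃ e : V.E, V.StepE e x x'

/-- The reachability relation `→_V*`. -/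
def Reach : NVec d → NVec d → Prop := Relation.ReflTransGen V.Step

/-- For a word `w = e₁ … e_k` of edges, `→_w := →_{e₁} ∘ … ∘ →_{e_k}`. -/
def StepWord : List V.E → NVec d → NVec d → Prop
  | [] => Eq
  | e :: w => fun x z => ∃ y, V.StepE e x y ∧ StepWord w y z

end PVAS

/-- Composition of a finite list of relations. -/
def compList {α : Type*} : List (α → α → Prop) → α → α → Prop
  | [] => Eq
  | R :: Rs => fun x z => ∃ y, R x y ∧ compList Rs y z

/-- A set in a commutative monoid is linear if it is of the form
`b + ℕ·p₁ + … + ℕ·p_r`. -/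
def IsLinSet {M : Type*} [AddCommMonoid M] (L : Set M) : Prop :=
  ∃ (b : M) (r : ℕ) (p : Fin r → M),
    L = {x | ∃ c : Fin r → ℕ, x = b + ∑ i, c i • p i}

/-- A set is semilinear if it is a finite union of linear sets. -/
def IsSemilinSet {M : Type*} [AddCommMonoid M] (S : Set M) : Prop :=
  ∃ (n : ℕ) (L : Fin n → Set M), (∀ i, IsLinSet (L i)) ∧ S = ⋃ i, L i

/-!
Runs of a PVAS, ordered by Higman's embedding level by level, are well-quasi-ordered. Going up from
a run adds to its endpoints a pair of vectors from a submonoid, and for each finitely generated part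
of that submonoid the additions are realised by one list of words, whose words are iterated inside
the run. Choosing a run for every point of a linear piece `b + φ(ℕ^ι)` of the reachability relation,
we get submonoids `D m` of `ℕ^ι` such that `n ∈ m + D m` is a well-quasi-order, and it is enough to
cover `ℕ^ι` by finitely many sets `m + ⟨G⟩` with `G ⊆ D m` finite.

If there is no such covering, some ultrafilter on `ℕ^ι` avoids all these sets. It tends to infinity
in a direction `θ`; let `S` be the space spanned by the lattice points arbitrarily close to the line
`ℝ θ`. By the well-quasi-order, enough of the `D m` fill, up to bounded error, a neighbourhood of
`θ` in `S`: otherwise functionals that are nonnegative on `D m` yield an infinite bad sequence.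
Hence the situation persists modulo `S`. Repeating this, the dimension drops until the ultrafilter
is bounded, which contradicts the well-quasi-order.
-/

open Filter Topology

/-! ### Lattice points near a line -/

theorem exists_finset_mem_span_image {R M N : Type*} [Semiring R] [AddCommMonoid N] [Module R N]
    {f : M → N} {s : Set M} {x : N} (hx : x ∈ Submodule.span R (f '' s)) :
    ∃ F : Finset M, ↑F ⊆ s ∧ x ∈ Submodule.span R (f '' F) := by
  obtain ⟨F, hF, hsum⟩ := Submodule.mem_span_image_iff_exists_fun R |>.1 hx
  exact ⟨F, hF, Submodule.mem_span_image_finset_iff_exists_fun R |>.2 hsum⟩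

section Rounding

variable {M E : Type*} [AddCommGroup M] [NormedAddCommGroup E] [NormedSpace ℝ E] (A : M →+ E)

theorem exists_mem_addSubgroup_closure_norm_sub_le (F : Finset M) {y : E}
    (hy : y ∈ Submodule.span ℝ (A '' F)) :
    ∃ g ∈ AddSubgroup.closure (F : Set M), ‖y - A g‖ ≤ ∑ f ∈ F, ‖A f‖ := by
  obtain ⟨c, rfl⟩ := Submodule.mem_span_image_finset_iff_exists_fun' ℝ |>.1 hy
  refine ⟨∑ f ∈ F, ⌊c f⌋ • f,
    sum_mem fun f hf => zsmul_mem (AddSubgroup.subset_closure hf) _, ?_⟩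
  simp only [map_sum, map_zsmul, ← Finset.sum_sub_distrib, ← Int.cast_smul_eq_zsmul ℝ, ← sub_smul]
  refine norm_sum_le_of_le _ fun f _ => ?_
  rw [Int.self_sub_floor, norm_smul, Real.norm_of_nonneg (Int.fract_nonneg _)]
  exact mul_le_of_le_one_left (norm_nonneg _) (Int.fract_lt_one _).le

theorem exists_mem_addSubmonoid_closure_norm_sub_le (F : Finset M) {y : E}
    (hy : y ∈ PointedCone.hull ℝ (A '' F)) :
    ∃ g ∈ AddSubmonoid.closure (F : Set M), ‖y - A g‖ ≤ ∑ f ∈ F, ‖A f‖ := by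
  obtain ⟨c, rfl⟩ := Submodule.mem_span_image_finset_iff_exists_fun' {r : ℝ // 0 ≤ r} |>.1 hy
  refine ⟨∑ f ∈ F, ⌊(c f : ℝ)⌋₊ • f,
    sum_mem fun f hf => nsmul_mem (AddSubmonoid.subset_closure hf) _, ?_⟩
  simp only [map_sum, map_nsmul, ← Finset.sum_sub_distrib, ← Nat.cast_smul_eq_nsmul ℝ]
  refine norm_sum_le_of_le _ fun f _ => ?_
  change ‖(c f : ℝ) • A f - _‖ ≤ _
  rw [← sub_smul, norm_smul, Real.norm_of_nonneg (sub_nonneg.2 (Nat.floor_le (c f).2))]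
  exact mul_le_of_le_one_left (norm_nonneg _) (by linarith [Nat.lt_floor_add_one (c f : ℝ)])

variable [FiniteDimensional ℝ E]

theorem exists_norm_map_sub_smul_lt {θ : E} (hθ : θ ∈ Submodule.span ℝ (Set.range A)) {ε : ℝ}
    (hε : 0 < ε) (T : ℝ) : ∃ (x : M) (t : ℝ), T ≤ t ∧ ‖A x - t • θ‖ < ε := by
  have := FiniteDimensional.proper ℝ E
  obtain ⟨F, -, hθF⟩ := exists_finset_mem_span_image (Set.image_univ (f := A) ▸ hθ)
  let T' := max T 1
  choose x _ hx using fun k : ℕ =>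
    exists_mem_addSubgroup_closure_norm_sub_le A F (Submodule.smul_mem _ (k * T') hθF)
  obtain ⟨a, -, φ, hφ, ha⟩ := tendsto_subseq_of_bounded Metric.isBounded_closedBall
    fun k => mem_closedBall_zero_iff.2 (hx k)
  obtain ⟨N, hN⟩ := Metric.cauchySeq_iff'.1 ha.cauchySeq ε hε
  have hclose := hN (N + 1) N.le_succ
  have hstep : (φ N : ℝ) + 1 ≤ φ (N + 1) := by exact_mod_cast hφ N.lt_succ_self
  refine ⟨x (φ (N + 1)) - x (φ N), φ (N + 1) * T' - φ N * T', ?_, ?_⟩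
  · nlinarith [le_max_left T 1, le_max_right T 1]
  · rw [dist_comm, dist_eq_norm] at hclose
    refine lt_of_eq_of_lt (congrArg norm ?_) hclose
    simp only [Function.comp_apply, map_sub, sub_smul]
    abel

end Rounding

section NearLine

variable {M E : Type*} [AddCommGroup M] [NormedAddCommGroup E] [NormedSpace ℝ E] (A : M →+ E)
  (θ : E)

/-- The elements whose image under `A` is within distance `ε` of the line `ℝ θ`. -/
def nearLine (ε : ℝ) : Set M := {x | ∃ t : ℝ, ‖A x - t • θ‖ < ε}

theorem nearLine_mono : Monotone (nearLine A θ) :=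
  fun _ _ h _ ⟨t, ht⟩ => ⟨t, ht.trans_le h⟩

theorem exists_eventually_span_image_nearLine_eq [FiniteDimensional ℝ E] :
    ∃ S : Submodule ℝ E, ∀ᶠ ε in 𝓝[>] 0, Submodule.span ℝ (A '' nearLine A θ ε) = S := by
  obtain ⟨_, ⟨ε₀, hε₀, rfl⟩, hmin⟩ := IsArtinian.set_has_minimal
    ((fun ε => Submodule.span ℝ (A '' nearLine A θ ε)) '' Set.Ioi 0)
    (Set.nonempty_Ioi.image _)
  refine ⟨Submodule.span ℝ (A '' nearLine A θ ε₀), ?_⟩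
  filter_upwards [Ioo_mem_nhdsGT hε₀] with ε hε
  have hle : Submodule.span ℝ (A '' nearLine A θ ε) ≤ Submodule.span ℝ (A '' nearLine A θ ε₀) :=
    Submodule.span_mono (Set.image_mono (nearLine_mono A θ hε.2.le))
  exact hle.eq_of_not_lt (hmin _ ⟨ε, hε.1, rfl⟩)

variable {A θ} {S : Submodule ℝ E}
  (hS : ∀ᶠ ε in 𝓝[>] 0, Submodule.span ℝ (A '' nearLine A θ ε) = S)

include hS in
theorem exists_mem_nearLine_map_neg {l : E →ₗ[ℝ] ℝ} (hl : ∃ x ∈ S, l x ≠ 0) {ε : ℝ}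
    (hε : 0 < ε) : ∃ (x : M) (t : ℝ), ‖A x - t • θ‖ < ε ∧ l (A x) < 0 := by
  obtain ⟨δ, hspan, hδ⟩ := (hS.and (Ioo_mem_nhdsGT hε)).exists
  obtain ⟨x, ⟨t, hx⟩, hlx⟩ : ∃ x ∈ nearLine A θ δ, l (A x) ≠ 0 := by
    by_contra! hzero
    obtain ⟨y, hy, hly⟩ := hl
    have hker : Submodule.span ℝ (A '' nearLine A θ δ) ≤ LinearMap.ker l :=
      Submodule.span_le.2 (Set.image_subset_iff.2 hzero)
    exact hly (hker (hspan ▸ hy))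
  rcases hlx.lt_or_gt with h | h
  · exact ⟨x, t, hx.trans hδ.2, h⟩
  · refine ⟨-x, -t, ?_, by simpa using h⟩
    rw [map_neg, neg_smul, neg_sub_neg, norm_sub_rev]
    exact hx.trans hδ.2

variable [FiniteDimensional ℝ E] (hθ : θ ∈ Submodule.span ℝ (Set.range A))

include hS hθ in
theorem mem_of_eventually_span_image_nearLine_eq : θ ∈ S := by
  refine (Submodule.closed_of_finiteDimensional S).closure_subset_iff.2 subset_rfl
    (Metric.mem_closure_iff.2 fun δ hδ => ?_)
  obtain ⟨ε, hspan, hε⟩ := (hS.and (Ioo_mem_nhdsGT hδ)).exists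
  obtain ⟨x, t, ht, hx⟩ := exists_norm_map_sub_smul_lt A hθ hε.1 1
  have hxS : A x ∈ S := hspan ▸ Submodule.subset_span ⟨x, ⟨t, hx⟩, rfl⟩
  have ht0 : 0 < t := one_pos.trans_le ht
  refine ⟨t⁻¹ • A x, S.smul_mem _ hxS, ?_⟩
  have hscale : θ - t⁻¹ • A x = -(t⁻¹ • (A x - t • θ)) := by
    rw [smul_sub, inv_smul_smul₀ ht0.ne', neg_sub]
  rw [dist_eq_norm, hscale, norm_neg, norm_smul, norm_inv, Real.norm_of_nonneg ht0.le]
  exact (mul_le_of_le_one_left (norm_nonneg _) (inv_le_one_of_one_le₀ ht)).trans_lt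
    (hx.trans hε.2)

include hS hθ in
theorem exists_nonneg_norm_map_sub_smul_lt_map_neg {l : E →ₗ[ℝ] ℝ} (hl : ∃ x ∈ S, l x ≠ 0)
    (hlθ : l θ ≤ 0) {ε : ℝ} (hε : 0 < ε) :
    ∃ (x : M) (t : ℝ), 0 ≤ t ∧ ‖A x - t • θ‖ < ε ∧ l (A x) < 0 := by
  obtain ⟨x₀, t₀, hx₀, hlx₀⟩ := exists_mem_nearLine_map_neg hS hl (half_pos hε)
  have hcont : Tendsto l (𝓝 0) (𝓝 0) := by
    simpa using (LinearMap.continuous_of_finiteDimensional l).tendsto 0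
  obtain ⟨δ, hδ, hball⟩ := Metric.eventually_nhds_iff.1
    (hcont.eventually_lt_const (neg_pos.2 hlx₀))
  obtain ⟨x₁, t₁, ht₁, hx₁⟩ :=
    exists_norm_map_sub_smul_lt A hθ (lt_min hδ (half_pos hε)) (max 0 (-t₀))
  have hlx₁ : l (A x₁ - t₁ • θ) < -l (A x₀) :=
    hball (by simpa using hx₁.trans_le (min_le_left _ _))
  refine ⟨x₀ + x₁, t₀ + t₁, by linarith [le_max_right 0 (-t₀)], ?_, ?_⟩
  · rw [map_add, add_smul, add_sub_add_comm]
    linarith [norm_add_le (A x₀ - t₀ • θ) (A x₁ - t₁ • θ), hx₁.trans_le (min_le_right _ _)]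
  · have ht₁0 : 0 ≤ t₁ := (le_max_left _ _).trans ht₁
    have := mul_nonpos_of_nonneg_of_nonpos ht₁0 hlθ
    simp only [map_sub, map_smul, smul_eq_mul] at hlx₁
    rw [map_add, map_add]
    linarith

end NearLine

section ConeDichotomy

variable {E : Type*} [NormedAddCommGroup E] [NormedSpace ℝ E] [FiniteDimensional ℝ E]

theorem exists_finset_hull_mem_nhds {X : Set E} {θ : E}
    (h : (PointedCone.hull ℝ X : Set E) ∈ 𝓝 θ) :
    ∃ F : Finset E, ↑F ⊆ X ∧ (PointedCone.hull ℝ (F : Set E) : Set E) ∈ 𝓝 θ := by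
  classical
  obtain ⟨b, hθb, hb⟩ := exists_mem_interior_convexHull_affineBasis h
  choose T hTX hbT using fun i => Submodule.mem_span_finite_of_mem_span
    (hb (subset_convexHull ℝ _ ⟨i, rfl⟩))
  refine ⟨Finset.univ.biUnion T, by simpa using hTX, mem_of_superset
    (mem_interior_iff_mem_nhds.1 hθb) (convexHull_min ?_ (PointedCone.convex _))⟩
  rintro _ ⟨i, rfl⟩
  exact Submodule.span_mono (by exact_mod_cast Finset.subset_biUnion_of_mem T (Finset.mem_univ i))
    (hbT i)

theorem interior_hull_nonempty_of_span_eq_top {X : Set E} (h : Submodule.span ℝ X = ⊤) :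
    (interior (PointedCone.hull ℝ X : Set E)).Nonempty := by
  have hX : X ⊆ (PointedCone.hull ℝ X : Set E) := Submodule.subset_span
  have htop : Submodule.span ℝ (PointedCone.hull ℝ X : Set E) = ⊤ :=
    top_le_iff.1 (h ▸ Submodule.span_mono hX)
  rw [(PointedCone.convex _).interior_nonempty_iff_affineSpan_eq_top,
    ← Set.insert_eq_of_mem (zero_mem (PointedCone.hull ℝ X)), ← SetLike.coe_set_eq,
    affineSpan_insert_zero, htop, AffineSubspace.top_coe, Submodule.top_coe]

theorem exists_functional_nonneg_of_hull_notMem_nhds {X : Set E} {θ : E}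
    (h : (PointedCone.hull ℝ X : Set E) ∉ 𝓝 θ) :
    ∃ l : E →ₗ[ℝ] ℝ, l ≠ 0 ∧ l θ ≤ 0 ∧ ∀ x ∈ X, 0 ≤ l x := by
  by_cases hspan : Submodule.span ℝ X = ⊤
  · obtain ⟨f, hf0, hf⟩ := geometric_hahn_banach_of_nonempty_interior_point
      (PointedCone.convex _) (mem_interior_iff_mem_nhds.not.2 h)
      (interior_hull_nonempty_of_span_eq_top hspan)
    have hf0' : -f.toLinearMap ≠ 0 := neg_ne_zero.2 (ContinuousLinearMap.coe_injective.ne hf0)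
    refine ⟨-f.toLinearMap, hf0', by simpa using hf 0 (zero_mem _), fun x hx => ?_⟩
    by_contra! hneg
    have hfx : 0 < f x := by simpa using hneg
    obtain ⟨n, hn⟩ := exists_lt_nsmul hfx (f θ)
    exact hn.not_ge (by simpa using hf (n • x) (nsmul_mem (Submodule.subset_span hx) n))
  · obtain ⟨f, hf0, hf⟩ := Submodule.exists_le_ker_of_lt_top _ (lt_top_iff_ne_top.2 hspan)
    have hX : ∀ x ∈ X, f x = 0 := fun x hx => hf (Submodule.subset_span hx)
    rcases le_total (f θ) 0 with hθ | hθ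
    · exact ⟨f, hf0, hθ, fun x hx => (hX x hx).ge⟩
    · exact ⟨-f, neg_ne_zero.2 hf0, by simpa using hθ, fun x hx => by simp [hX x hx]⟩

theorem finset_hull_eventually_or_exists_functional_nonneg {S : Submodule ℝ E} {X : Set E}
    (hX : X ⊆ S) {θ : E} (hθ : θ ∈ S) :
    (∃ F : Finset E, ↑F ⊆ X ∧ ∀ᶠ x in 𝓝[S] θ, x ∈ PointedCone.hull ℝ (F : Set E)) ∨
      ∃ l : E →ₗ[ℝ] ℝ, (∃ x ∈ S, l x ≠ 0) ∧ l θ ≤ 0 ∧ ∀ x ∈ X, 0 ≤ l x := by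
  classical
  by_cases h : (PointedCone.hull ℝ (S.subtype ⁻¹' X) : Set S) ∈ 𝓝 ⟨θ, hθ⟩
  · obtain ⟨F, hFX, hF⟩ := exists_finset_hull_mem_nhds h
    refine .inl ⟨F.image S.subtype, by simpa using hFX, ?_⟩
    have hmap : ∀ x : S, x ∈ PointedCone.hull ℝ (F : Set S) →
        S.subtype x ∈ PointedCone.hull ℝ ((F.image S.subtype : Finset E) : Set E) := by
      intro x hx
      rw [Finset.coe_image]
      exact Submodule.image_span_subset_span (S.subtype.restrictScalars {r : ℝ // 0 ≤ r}) _
        ⟨x, hx, rfl⟩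
    rw [nhdsWithin_eq_map_subtype_coe hθ, eventually_map]
    exact mem_of_superset hF hmap
  · obtain ⟨l, hl0, hlθ, hlX⟩ := exists_functional_nonneg_of_hull_notMem_nhds h
    obtain ⟨g, rfl⟩ := l.exists_extend
    obtain ⟨x, hx⟩ := DFunLike.ne_iff.1 hl0
    exact .inr ⟨g, ⟨x, x.2, hx⟩, hlθ, fun y hy => hlX ⟨y, hX hy⟩ hy⟩

end ConeDichotomy

section BoundedCoefficients

variable {κ E : Type*} [NormedAddCommGroup E] [NormedSpace ℝ E]

theorem norm_map_mul_div_le [Fintype κ] [DecidableEq κ] (L : (κ → ℕ) →+ E) (c : κ → ℕ) (i N : ℕ) :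
    ‖L (fun k => i * c k / N)‖ ≤ i / N * ‖L c‖ + ∑ k, ‖L (Pi.single k 1)‖ := by
  have hL : ∀ x : κ → ℕ, L x = ∑ k, (x k : ℝ) • L (Pi.single k 1) := fun x => by
    simp only [Nat.cast_smul_eq_nsmul, ← map_nsmul, ← map_sum, ← Pi.single_smul, smul_eq_mul,
      mul_one, Finset.univ_sum_single]
  suffices ‖L (fun k => i * c k / N) - (i / N : ℝ) • L c‖ ≤ ∑ k, ‖L (Pi.single k 1)‖ by
    have hnorm : ‖(i / N : ℝ) • L c‖ = i / N * ‖L c‖ := by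
      rw [norm_smul, Real.norm_of_nonneg (by positivity)]
    rw [← hnorm]
    linarith [norm_sub_norm_le (L fun k => i * c k / N) ((i / N : ℝ) • L c)]
  rw [hL, hL c, Finset.smul_sum, ← Finset.sum_sub_distrib]
  refine norm_sum_le_of_le _ fun k _ => ?_
  rw [smul_smul, ← sub_smul, norm_smul]
  refine mul_le_of_le_one_left (norm_nonneg _) ?_
  rw [norm_sub_rev, div_mul_eq_mul_div, ← Nat.cast_mul, ← Nat.floor_div_eq_div (K := ℝ),
    Real.norm_of_nonneg (sub_nonneg.2 (Nat.floor_le (by positivity)))]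
  linarith [Nat.lt_floor_add_one (((i * c k : ℕ) : ℝ) / N)]

variable [Finite κ] (L : (κ → ℕ) →+ E)
  (hL : ∀ R, (Set.range L ∩ Metric.closedBall 0 R).Finite)

include hL in
/-- The vectors `⌊i c / c j⌋`, `i = 0, 1, …`, are increasing and have images close to the segment
from `0` to `L c`; if `c j` is large, many of these images are bounded, so two of them agree. -/
theorem exists_le_ne_zero_map_eq_zero :
    ∃ C : ℕ, ∀ (c : κ → ℕ) (j : κ), C * (1 + ‖L c‖) < c j → ∃ y ≤ c, y ≠ 0 ∧ L y = 0 := by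
  classical
  cases nonempty_fintype κ
  let R := ∑ k, ‖L (Pi.single k 1)‖
  refine ⟨(hL (1 + R)).toFinset.card, fun c j hcj => ?_⟩
  set C := (hL (1 + R)).toFinset.card
  have hN : (0 : ℝ) < c j := lt_of_le_of_lt (by positivity) hcj
  set x : ℕ → κ → ℕ := fun i k => i * c k / c j
  have hxj : ∀ i, x i j = i := fun i => Nat.mul_div_cancel i (by exact_mod_cast hN)
  have hle : ∀ i ∈ Finset.range (C + 1), (i : ℝ) * (1 + ‖L c‖) ≤ c j := fun i hi => by
    have hiC : (i : ℝ) ≤ C := by exact_mod_cast Nat.lt_succ_iff.1 (Finset.mem_range.1 hi)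
    nlinarith [norm_nonneg (L c)]
  have hmaps : Set.MapsTo (fun i => L (x i)) (Finset.range (C + 1)) (hL (1 + R)).toFinset := by
    refine fun i hi => (hL _).mem_toFinset.2 ⟨⟨_, rfl⟩, mem_closedBall_zero_iff.2 ?_⟩
    refine (norm_map_mul_div_le L c i (c j)).trans (add_le_add_left ?_ R)
    rw [div_mul_eq_mul_div, div_le_one hN]
    nlinarith [hle i hi, Nat.cast_nonneg (α := ℝ) i]
  obtain ⟨a, ha, b, hb, hne, heq⟩ :=
    Finset.exists_ne_map_eq_of_card_lt_of_maps_to (by simp [C]) hmaps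
  wlog hab : a < b generalizing a b
  · exact this b hb a ha hne.symm heq.symm (hne.lt_or_gt.resolve_left hab)
  have hxc : x b ≤ c := fun k => by
    have hbN : (b : ℝ) ≤ c j := by
      nlinarith [hle b hb, norm_nonneg (L c), Nat.cast_nonneg (α := ℝ) b]
    exact Nat.div_le_of_le_mul (Nat.mul_le_mul_right _ (by exact_mod_cast hbN))
  have hmono : x a ≤ x b := fun k => Nat.div_le_div_right (Nat.mul_le_mul_right _ hab.le)
  refine ⟨x b - x a, tsub_le_self.trans hxc, fun h => hab.not_ge ?_, ?_⟩
  · simpa only [hxj] using tsub_eq_zero_iff_le.1 h j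
  · simpa [tsub_add_cancel_of_le hmono, heq] using map_add L (x b - x a) (x a)

include hL in
theorem exists_le_map_eq_forall_le :
    ∃ C : ℕ, ∀ c : κ → ℕ, ∃ c' ≤ c, L c' = L c ∧ ∀ j, c' j ≤ C * (1 + ‖L c‖) := by
  obtain ⟨C, hC⟩ := exists_le_ne_zero_map_eq_zero L hL
  refine ⟨C, fun c => ?_⟩
  obtain ⟨c', hc', hmin⟩ := exists_minimal_le_of_wellFoundedLT (fun x => L x = L c) c rfl
  refine ⟨c', hc', hmin.prop, fun j => ?_⟩
  by_contra! hlt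
  obtain ⟨y, hy, hy0, hLy⟩ := hC c' j (hmin.prop ▸ hlt)
  have hsub : L (c' - y) = L c := by
    rw [← hmin.prop, ← add_zero (L (c' - y)), ← hLy, ← map_add, tsub_add_cancel_of_le hy]
  have hle : c' ≤ c' - y := hmin.le_of_le hsub tsub_le_self
  have hadd := add_le_of_le_tsub_right_of_le hy hle
  exact hy0 (by simpa using hadd)

end BoundedCoefficients

theorem exists_mem_closure_map_eq_norm_le {M E F : Type*} [AddCommMonoid M] [NormedAddCommGroup E]
    [NormedSpace ℝ E] [SeminormedAddCommGroup F] (A : M →+ E) (B : M →+ F)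
    (hA : ∀ R, (Set.range A ∩ Metric.closedBall 0 R).Finite) (G : Finset M) :
    ∃ C : ℝ, ∀ g ∈ AddSubmonoid.closure (G : Set M), ∃ g' ∈ AddSubmonoid.closure (G : Set M),
      (∃ h ∈ AddSubmonoid.closure (G : Set M), g = h + g') ∧ A g' = A g ∧
        ‖B g'‖ ≤ C * (1 + ‖A g‖) := by
  let Φ : (G → ℕ) →+ M := (Fintype.linearCombination ℕ ((↑) : G → M)).toAddMonoidHom
  have hΦ : ∀ c, Φ c ∈ AddSubmonoid.closure (G : Set M) := fun c =>
    sum_mem fun i _ => nsmul_mem (AddSubmonoid.subset_closure i.2) _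
  obtain ⟨C, hC⟩ := exists_le_map_eq_forall_le (A.comp Φ) fun R =>
    (hA R).subset (Set.inter_subset_inter_left _ (by rintro _ ⟨c, rfl⟩; exact ⟨_, rfl⟩))
  refine ⟨∑ i : G, C * ‖B i‖, fun g hg => ?_⟩
  obtain ⟨c, rfl⟩ : ∃ c, Φ c = g := by
    rw [← Submodule.span_nat_eq_addSubmonoidClosure, Submodule.mem_toAddSubmonoid,
      Submodule.mem_span_finset'] at hg
    exact hg
  obtain ⟨c', hc', hLc', hbound⟩ := hC c
  refine ⟨Φ c', hΦ c', ⟨Φ (c - c'), hΦ _, ?_⟩, hLc', ?_⟩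
  · rw [← map_add, tsub_add_cancel_of_le hc']
  · rw [show Φ c' = ∑ i : G, c' i • (i : M) from rfl, map_sum, Finset.sum_mul]
    refine norm_sum_le_of_le _ fun i _ => ?_
    rw [map_nsmul]
    refine (norm_nsmul_le).trans ?_
    have := mul_le_mul_of_nonneg_right (hbound i) (norm_nonneg (B i))
    simp only [AddMonoidHom.comp_apply] at this
    nlinarith

section Differences

variable {M : Type*} [AddCommGroup M] (N : AddSubmonoid M)

theorem exists_mem_add_mem_of_mem_addSubgroup_closure {x : M}
    (hx : x ∈ AddSubgroup.closure (N : Set M)) : ∃ a ∈ N, x + a ∈ N := by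
  induction hx using AddSubgroup.closure_induction with
  | mem x hx => exact ⟨0, N.zero_mem, by simpa using hx⟩
  | zero => exact ⟨0, N.zero_mem, by simp⟩
  | add x y _ _ hx hy =>
    obtain ⟨⟨a, ha, hxa⟩, b, hb, hyb⟩ := hx, hy
    exact ⟨a + b, N.add_mem ha hb, add_add_add_comm x y a b ▸ N.add_mem hxa hyb⟩
  | neg x _ hx =>
    obtain ⟨a, ha, hxa⟩ := hx
    exact ⟨x + a, hxa, by simpa using ha⟩

theorem exists_mem_forall_add_mem_of_subset_addSubgroup_closure {W : Finset M}
    (hW : (W : Set M) ⊆ AddSubgroup.closure (N : Set M)) : ∃ d ∈ N, ∀ w ∈ W, w + d ∈ N := by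
  classical
  choose! a haN ha using fun w (hw : w ∈ W) =>
    exists_mem_add_mem_of_mem_addSubgroup_closure N (hW hw)
  refine ⟨∑ w ∈ W, a w, sum_mem haN, fun w hw => ?_⟩
  rw [← Finset.add_sum_erase W a hw, ← add_assoc]
  exact N.add_mem (ha w hw) (sum_mem fun v hv => haN v (Finset.mem_of_mem_erase hv))

end Differences

section KerClosure

variable {M E : Type*} [AddCommGroup M] [AddCommGroup E] {A : M →+ E} {N : AddSubmonoid M}

/-- The group generated by the elements of `N` killed by `A`. -/
def kerClosure (A : M →+ E) (N : AddSubmonoid M) : AddSubgroup M :=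
  AddSubgroup.closure (N ∩ A.ker)

theorem kerClosure_le_ker : kerClosure A N ≤ A.ker :=
  (AddSubgroup.closure_le _).2 Set.inter_subset_right

theorem mem_kerClosure {x : M} (hx : x ∈ N) (hA : A x = 0) : x ∈ kerClosure A N :=
  AddSubgroup.subset_closure ⟨hx, hA⟩

variable [Module ℝ E] {S : Submodule ℝ E}

theorem kerClosure_mkQ_comp_eq :
    kerClosure (S.mkQ.toAddMonoidHom.comp A) N = AddSubgroup.closure (N ∩ A ⁻¹' S) := by
  rw [kerClosure]
  congr 2
  ext x
  simp [AddMonoidHom.mem_ker]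

theorem kerClosure_le_kerClosure_mkQ_comp :
    kerClosure A N ≤ kerClosure (S.mkQ.toAddMonoidHom.comp A) N :=
  AddSubgroup.closure_mono (Set.inter_subset_inter_right _ fun x hx => by
    simp [AddMonoidHom.mem_ker, AddMonoidHom.mem_ker.1 hx])

end KerClosure

section ProperModulo

variable {M E : Type*} [AddCommGroup M] [NormedAddCommGroup E] {A : M →+ E} {Λ : AddSubgroup M}

/-- `A` is proper modulo the subgroup `Λ`: the elements of bounded image meet only finitely many
cosets of `Λ`. For `Λ ≤ ker A` this says that `A` has discrete image and that `Λ` has finite index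
in `ker A`. -/
def ProperModulo (A : M →+ E) (Λ : AddSubgroup M) : Prop :=
  ∀ R, (((↑) : M → M ⧸ Λ) '' (A ⁻¹' Metric.closedBall 0 R)).Finite

namespace ProperModulo

variable (h : ProperModulo A Λ)
include h

theorem range_inter_closedBall_finite (hΛ : Λ ≤ A.ker) (R : ℝ) :
    (Set.range A ∩ Metric.closedBall 0 R).Finite := by
  refine ((h R).image (QuotientAddGroup.lift Λ A hΛ)).subset ?_
  rintro _ ⟨⟨x, rfl⟩, hx⟩
  exact ⟨x, ⟨x, hx, rfl⟩, rfl⟩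

theorem exists_finset_sub_mem (s : Set M) (R : ℝ) :
    ∃ W : Finset M, ↑W ⊆ s ∧ ∀ x ∈ s, ‖A x‖ ≤ R → ∃ w ∈ W, x - w ∈ Λ := by
  classical
  have hfin : (((↑) : M → M ⧸ Λ) '' (s ∩ A ⁻¹' Metric.closedBall 0 R)).Finite :=
    (h R).subset (Set.image_mono Set.inter_subset_right)
  obtain ⟨W, hWs, hW⟩ := Finset.subset_set_image_iff.1 hfin.coe_toFinset.subset
  refine ⟨W, hWs.trans Set.inter_subset_left, fun x hxs hx => ?_⟩
  have hxW : (x : M ⧸ Λ) ∈ W.image ((↑) : M → M ⧸ Λ) :=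
    hW ▸ hfin.mem_toFinset.2 ⟨x, ⟨hxs, mem_closedBall_zero_iff.2 hx⟩, rfl⟩
  obtain ⟨w, hwW, hw⟩ := Finset.mem_image.1 hxW
  exact ⟨w, hwW, by simpa [neg_add_eq_sub] using QuotientAddGroup.eq.1 hw⟩

theorem exists_pos_nsmul_mem : ∃ e : ℕ, 0 < e ∧ ∀ z, A z = 0 → e • z ∈ Λ := by
  let K := A.ker.map (QuotientAddGroup.mk' Λ)
  have : Finite K := ((h 0).subset (Set.image_mono fun z hz => by simpa using hz)).to_subtype
  refine ⟨Nat.card K, Nat.card_pos, fun z hz => ?_⟩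
  have hcard : Nat.card K • (⟨_, z, hz, rfl⟩ : K) = 0 := card_nsmul_eq_zero'
  exact (QuotientAddGroup.eq_zero_iff _).1 (congrArg Subtype.val hcard)

theorem exists_eventually_sub_mem {U : Ultrafilter M} {R : ℝ} (hU : ∀ᶠ n in U, ‖A n‖ ≤ R) :
    ∃ c : M, ∀ᶠ n in U, n - c ∈ Λ := by
  have hmem : ((↑) : M → M ⧸ Λ) '' (A ⁻¹' Metric.closedBall 0 R) ∈ U.map ((↑) : M → M ⧸ Λ) :=
    Ultrafilter.mem_map.2 (hU.mono fun n hn => ⟨n, by simpa using hn, rfl⟩)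
  obtain ⟨_, ⟨c, -, rfl⟩, hc⟩ := (U.map _).eq_pure_of_finite_mem (h R) hmem
  have hpure : {↑c} ∈ U.map ((↑) : M → M ⧸ Λ) := hc ▸ Ultrafilter.mem_pure.2 (Set.mem_singleton _)
  refine ⟨c, mem_of_superset (Ultrafilter.mem_map.1 hpure) fun n hn => ?_⟩
  simpa [neg_add_eq_sub] using QuotientAddGroup.eq.1 (Eq.symm hn)

theorem mkQ_comp [NormedSpace ℝ E] {S : Submodule ℝ E} [IsClosed (S : Set E)]
    {Λ' : AddSubgroup M} (hΛ : Λ ≤ Λ') {F : Finset M} (hF : ↑F ⊆ (Λ' : Set M))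
    (hS : S ≤ Submodule.span ℝ (A '' F)) :
    ProperModulo (S.mkQ.toAddMonoidHom.comp A) Λ' := by
  intro R
  refine ((h (R + 1 + ∑ f ∈ F, ‖A f‖)).image (QuotientAddGroup.map Λ Λ' (.id M) hΛ)).subset ?_
  rintro _ ⟨x, hx, rfl⟩
  obtain ⟨y, hxy, hy⟩ := Submodule.Quotient.norm_mk_lt (S.mkQ (A x)) one_pos
  obtain ⟨g, hg, hgy⟩ := exists_mem_addSubgroup_closure_norm_sub_le A F
    (hS ((Submodule.Quotient.eq S).1 hxy.symm))
  refine ⟨(x - g : M), ⟨x - g, mem_closedBall_zero_iff.2 ?_, rfl⟩, ?_⟩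
  · have hxR : ‖S.mkQ (A x)‖ ≤ R := mem_closedBall_zero_iff.1 hx
    rw [map_sub, show A x - A g = y + (A x - y - A g) by abel]
    linarith [norm_add_le y (A x - y - A g)]
  · have hgΛ : g ∈ Λ' := (AddSubgroup.closure_le Λ').2 hF hg
    exact QuotientAddGroup.eq.2 (by simpa using hgΛ)

end ProperModulo

end ProperModulo

theorem exists_seq_of_forall_list_exists {α : Type*} {P : α → Prop} {r : α → α → Prop}
    (h : ∀ L : List α, (∀ a ∈ L, P a) → L.Pairwise (flip r) → ∃ a, P a ∧ ∀ b ∈ L, r b a) :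
    ∃ f : ℕ → α, (∀ n, P (f n)) ∧ ∀ ⦃m n⦄, m < n → r (f m) (f n) := by
  have : Nonempty α := (h [] (by simp) .nil).nonempty
  choose! next hP hr using h
  let F : ℕ → List α := fun n => n.rec [] fun _ L => next L :: L
  have hF : ∀ n, (∀ a ∈ F n, P a) ∧ (F n).Pairwise (flip r) := by
    intro n
    induction n with
    | zero => exact ⟨by simp [F], .nil⟩
    | succ n ih =>
      exact ⟨List.forall_mem_cons.2 ⟨hP _ ih.1 ih.2, ih.1⟩, .cons (hr _ ih.1 ih.2) ih.2⟩
  have hmem : ∀ m n, m < n → next (F m) ∈ F n := by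
    intro m n hmn
    induction n, hmn using Nat.le_induction with
    | base => exact List.mem_cons_self
    | succ n _ ih => exact List.mem_cons_of_mem _ ih
  exact ⟨fun n => next (F n), fun n => hP _ (hF n).1 (hF n).2,
    fun m n hmn => hr _ (hF n).1 (hF n).2 _ (hmem m n hmn)⟩

/-! ### Covering `ℕ^ι` by finitely generated pieces -/

section Stage

variable {ι E : Type*} [NormedAddCommGroup E] [NormedSpace ℝ E]

/-- A state of the search for a contradiction from an ultrafilter `U` on `ι → ℤ` that avoids every
finitely generated piece `m + closure G`, `G ⊆ D m`. The map `A` records the directions along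
which `U` has not been seen to be absorbed, and `Good` is a set of base points `m` for which `D m`
is as large as possible in the directions which `A` has forgotten. -/
structure Stage (D : (ι → ℤ) → AddSubmonoid (ι → ℤ)) (U : Ultrafilter (ι → ℤ))
    (A : (ι → ℤ) →+ E) (Good : Set (ι → ℤ)) : Prop where
  span_range : Submodule.span ℝ (Set.range A) = ⊤
  nonneg : ∀ m ∈ Good, 0 ≤ m
  exists_good : ∀ n, 0 ≤ n → ∀ e : ℕ, 0 < e → ∃ m ∈ Good, ∃ z, A z = 0 ∧ n = m + e • z
  proper : ∀ m ∈ Good, ProperModulo A (kerClosure A (D m))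
  avoids : ∀ m ∈ Good, ∀ G : Finset (ι → ℤ), ↑G ⊆ (D m : Set (ι → ℤ)) →
    ∀ᶠ n in U, ∀ g ∈ AddSubmonoid.closure (G : Set (ι → ℤ)), n - m - g ∉ kerClosure A (D m)
  exists_pos_or_functional : ∃ w, A w = 0 ∧
    ∀ j, 0 < w j ∨ ∃ h : E →ₗ[ℝ] ℝ, ∀ x, (x j : ℝ) = h (A x)

namespace Stage

variable {D : (ι → ℤ) → AddSubmonoid (ι → ℤ)} {U : Ultrafilter (ι → ℤ)}
  {A : (ι → ℤ) →+ E} {Good : Set (ι → ℤ)}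

theorem frequently_lt_norm (h : Stage D U A Good) (hU : ∀ᶠ n in (U : Filter (ι → ℤ)), 0 ≤ n)
    (hD : (Set.Ici 0).PartiallyWellOrderedOn fun m n => n - m ∈ D m) (R : ℝ) :
    ∃ᶠ n in (U : Filter (ι → ℤ)), R < ‖A n‖ := by
  classical
  intro hbdd
  replace hbdd : ∀ᶠ n in U, ‖A n‖ ≤ R := hbdd.mono fun _ => not_lt.1
  choose! c hc using fun m hm => (h.proper m hm).exists_eventually_sub_mem hbdd
  choose! e he0 he using fun m hm => (h.proper m hm).exists_pos_nsmul_mem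
  obtain ⟨m₀, hm₀, -⟩ := h.exists_good 0 le_rfl 1 one_pos
  have hconst : ∀ᶠ n in U, A n = A (c m₀) := (hc m₀ hm₀).mono fun n hn =>
    sub_eq_zero.1 (map_sub A n _ ▸ kerClosure_le_ker hn)
  obtain ⟨f, hf, hfU⟩ := exists_seq_of_forall_finset_exists (fun m => m ∈ Good ∧ A m = A (c m₀))
    (fun m m' => m' - c m ∈ kerClosure A (D m)) fun s hs => by
      have hev : ∀ᶠ n in U, ∀ m ∈ s, n - c m ∈ kerClosure A (D m) :=
        (eventually_all_finset s).2 fun m hm => hc m (hs m hm).1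
      obtain ⟨n, hn0, hnA, hn⟩ := (hU.and (hconst.and hev)).exists
      obtain ⟨m', hm', z, hz, rfl⟩ := h.exists_good n hn0 (∏ m ∈ s, e m)
        (Finset.prod_pos fun m hm => he0 m (hs m hm).1)
      rw [map_add, map_nsmul, hz, smul_zero, add_zero] at hnA
      refine ⟨m', ⟨hm', hnA⟩, fun m hm => ?_⟩
      have hmem : (∏ m ∈ s, e m) • z ∈ kerClosure A (D m) := by
        rw [← Finset.prod_erase_mul s e hm, mul_nsmul']
        exact nsmul_mem (he m (hs m hm).1 z hz) _
      simpa [add_sub_right_comm] using sub_mem (hn m hm) hmem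
  obtain ⟨j, k, hjk, hmem⟩ := hD.exists_lt (f := f) fun n => h.nonneg _ (hf n).1
  have hker : f k - f j ∈ kerClosure A (D (f j)) :=
    mem_kerClosure hmem (by rw [map_sub, (hf j).2, (hf k).2, sub_self])
  obtain ⟨n, hn, hnc⟩ := ((h.avoids _ (hf j).1 ∅ (by simp)).and (hc _ (hf j).1)).exists
  refine hn 0 (zero_mem _) ?_
  have := add_mem (sub_mem hnc (hfU j k hjk)) hker
  simpa using this

end Stage

end Stage

theorem exists_forall_pos_add_nsmul {ι : Type*} [Finite ι] (x w : ι → ℤ) :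
    ∃ K : ℕ, ∀ j, 0 < w j → 0 < (x + K • w) j := by
  have hev : ∀ᶠ K : ℕ in atTop, ∀ j, 0 < w j → 0 < (x + K • w) j := by
    refine eventually_all.2 fun j => ?_
    filter_upwards [eventually_gt_atTop (x j).natAbs] with K hK hw
    have : (K : ℤ) ≤ K * w j := le_mul_of_one_le_right (by positivity) hw
    simp only [Pi.add_apply, nsmul_eq_mul, Pi.mul_apply, Pi.natCast_apply]
    lia
  exact hev.exists

section Functional

variable {E : Type*} [NormedAddCommGroup E] [NormedSpace ℝ E]

theorem le_span_of_eventually_mem_hull {S : Submodule ℝ E} {X : Set E} {θ : E} (hθ : θ ∈ S)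
    (h : ∀ᶠ x in 𝓝[S] θ, x ∈ PointedCone.hull ℝ X) : S ≤ Submodule.span ℝ X := by
  have hspan : ∀ᶠ x in 𝓝[S] θ, x ∈ Submodule.span ℝ X :=
    h.mono fun x hx => Submodule.span_le_restrictScalars {r : ℝ // 0 ≤ r} ℝ X hx
  intro s hs
  have hlim : Tendsto (fun δ : ℝ => θ + δ • s) (𝓝[>] 0) (𝓝[S] θ) := by
    refine tendsto_nhdsWithin_iff.2 ⟨?_, .of_forall fun δ => S.add_mem hθ (S.smul_mem δ hs)⟩
    have : Tendsto (fun δ : ℝ => θ + δ • s) (𝓝 0) (𝓝 (θ + (0 : ℝ) • s)) :=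
      Continuous.tendsto (by fun_prop) 0
    simpa using this.mono_left nhdsWithin_le_nhds
  obtain ⟨δ, hδ, hδ0⟩ := ((hlim.eventually hspan).and self_mem_nhdsWithin).exists
  have hθX : θ ∈ Submodule.span ℝ X := hspan.self_of_nhdsWithin hθ
  exact (Submodule.smul_mem_iff _ (ne_of_gt hδ0)).1 ((Submodule.add_mem_iff_right _ hθX).1 hδ)

theorem eventually_forall_norm_lt_abs_map_lt [FiniteDimensional ℝ E] (l : E →ₗ[ℝ] ℝ) {c : ℝ}
    (hc : 0 < c) : ∀ᶠ ε in 𝓝[>] (0 : ℝ), ∀ v, ‖v‖ < ε → |l v| < c := by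
  have hcont : Tendsto (fun v => |l v|) (𝓝 0) (𝓝 0) := by
    simpa using (LinearMap.continuous_of_finiteDimensional l).abs.tendsto 0
  obtain ⟨δ, hδ, hball⟩ := Metric.eventually_nhds_iff.1 (hcont.eventually_lt_const hc)
  filter_upwards [Ioo_mem_nhdsGT hδ] with ε hε v hv
  exact hball (by simpa using hv.trans hε.2)

theorem le_ker_of_span_image_nearLine_eq [FiniteDimensional ℝ E] {M : Type*} [AddCommGroup M]
    {A : M →+ E} {θ : E} {S : Submodule ℝ E}
    (hS : ∀ᶠ ε in 𝓝[>] 0, Submodule.span ℝ (A '' nearLine A θ ε) = S)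
    (hθ : θ ∈ Submodule.span ℝ (Set.range A)) {f : M → ℤ} {l : E →ₗ[ℝ] ℝ}
    (hl : ∀ x, (f x : ℝ) = l (A x)) (hlθ : l θ = 0) : S ≤ LinearMap.ker l := by
  by_contra hle
  obtain ⟨δ, hδ, hδ0⟩ := ((eventually_forall_norm_lt_abs_map_lt l one_pos).and
    self_mem_nhdsWithin).exists
  obtain ⟨x, t, -, hx, hlx⟩ := exists_nonneg_norm_map_sub_smul_lt_map_neg hS hθ
    (SetLike.not_le_iff_exists.1 hle) hlθ.le hδ0
  have hlt := (abs_lt.1 (hδ _ hx)).1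
  rw [map_sub, map_smul, hlθ, smul_zero, sub_zero, ← hl] at hlt
  rw [← hl] at hlx
  have h₁ : -1 < f x := by exact_mod_cast hlt
  have h₂ : f x < 0 := by exact_mod_cast hlx
  lia

end Functional

section ContainsDirection

variable {M E : Type*} [AddCommGroup M] [NormedAddCommGroup E] [NormedSpace ℝ E]

/-- Up to bounded error, `N` contains all elements whose image lies in `S` in a direction close
to `θ`: finitely many elements of `N` are mapped to generators of a cone in `S` which is a
neighbourhood of `θ`. -/
def ContainsDirection (A : M →+ E) (S : Submodule ℝ E) (θ : E) (N : AddSubmonoid M) : Prop :=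
  ∃ F : Finset M, ↑F ⊆ (N : Set M) ∩ A ⁻¹' S ∧
    ∀ᶠ x in 𝓝[S] θ, x ∈ PointedCone.hull ℝ (A '' F)

variable {A : M →+ E} {S : Submodule ℝ E} {θ : E} {N : AddSubmonoid M}

theorem containsDirection_or_exists_functional_nonneg [FiniteDimensional ℝ E] (hθ : θ ∈ S) :
    ContainsDirection A S θ N ∨ ∃ l : E →ₗ[ℝ] ℝ, (∃ x ∈ S, l x ≠ 0) ∧ l θ ≤ 0 ∧
      ∀ f ∈ N, A f ∈ S → 0 ≤ l (A f) := by
  classical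
  have hX : A '' (N ∩ A ⁻¹' S) ⊆ S := Set.image_subset_iff.2 Set.inter_subset_right
  refine (finset_hull_eventually_or_exists_functional_nonneg hX hθ).imp ?_ ?_
  · rintro ⟨F, hFX, hF⟩
    obtain ⟨F, hFN, rfl⟩ := Finset.subset_set_image_iff.1 hFX
    exact ⟨F, hFN, by rwa [Finset.coe_image] at hF⟩
  · rintro ⟨l, hl, hlθ, hlX⟩
    exact ⟨l, hl, hlθ, fun f hfN hfS => hlX _ ⟨f, ⟨hfN, hfS⟩, rfl⟩⟩

theorem ContainsDirection.properModulo [IsClosed (S : Set E)] (h : ContainsDirection A S θ N)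
    (hθ : θ ∈ S) (hA : ProperModulo A (kerClosure A N)) :
    ProperModulo (S.mkQ.toAddMonoidHom.comp A)
      (kerClosure (S.mkQ.toAddMonoidHom.comp A) N) := by
  obtain ⟨F, hFN, hF⟩ := h
  refine hA.mkQ_comp kerClosure_le_kerClosure_mkQ_comp (F := F) ?_
    (le_span_of_eventually_mem_hull hθ hF)
  exact kerClosure_mkQ_comp_eq (A := A) (S := S) ▸ hFN.trans AddSubgroup.subset_closure

theorem ProperModulo.exists_finset_sub_mem_of_mem_hull (hA : ProperModulo A (kerClosure A N))
    {F : Finset M} (hFN : ↑F ⊆ (N : Set M) ∩ A ⁻¹' S) :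
    ∃ d, A d ∈ S ∧ ∃ H : Finset M, ↑H ⊆ (N : Set M) ∧
      ∀ x ∈ kerClosure (S.mkQ.toAddMonoidHom.comp A) N,
        A (x - d) ∈ PointedCone.hull ℝ (A '' F) →
          ∃ g ∈ AddSubmonoid.closure (H : Set M), x - g ∈ kerClosure A N := by
  classical
  set Λ := kerClosure (S.mkQ.toAddMonoidHom.comp A) N with hΛ
  rw [kerClosure_mkQ_comp_eq] at hΛ
  obtain ⟨W, hWΛ, hW⟩ := hA.exists_finset_sub_mem Λ (∑ f ∈ F, ‖A f‖)
  obtain ⟨d, hd, hWd⟩ := exists_mem_forall_add_mem_of_subset_addSubgroup_closure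
    (N ⊓ S.toAddSubmonoid.comap A) (hΛ ▸ hWΛ)
  refine ⟨d, hd.2, F ∪ W.image (· + d), ?_, fun x hx hxF => ?_⟩
  · rw [Finset.coe_union, Finset.coe_image]
    exact Set.union_subset (hFN.trans Set.inter_subset_left)
      (Set.image_subset_iff.2 fun w hw => (hWd w hw).1)
  obtain ⟨k, hk, hkx⟩ := exists_mem_addSubmonoid_closure_norm_sub_le A F hxF
  have hdΛ : d ∈ Λ := hΛ ▸ AddSubgroup.subset_closure hd
  have hkΛ : k ∈ Λ :=
    (AddSubmonoid.closure_le (S := Λ.toAddSubmonoid)).2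
      (hΛ ▸ hFN.trans AddSubgroup.subset_closure) hk
  obtain ⟨w, hw, hxw⟩ := hW (x - d - k) (sub_mem (sub_mem hx hdΛ) hkΛ) (by rwa [map_sub])
  refine ⟨k + (w + d), add_mem (AddSubmonoid.closure_mono (by simp) hk)
    (AddSubmonoid.subset_closure (by simpa using .inr hw)), ?_⟩
  rwa [show x - (k + (w + d)) = x - d - k - w by abel]

end ContainsDirection

namespace Stage

variable {ι E : Type*} [NormedAddCommGroup E] [NormedSpace ℝ E]
  {D : (ι → ℤ) → AddSubmonoid (ι → ℤ)} {U : Ultrafilter (ι → ℤ)}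
  {A : (ι → ℤ) →+ E} {Good : Set (ι → ℤ)} {S : Submodule ℝ E} {θ : E}

theorem exists_tendsto_inv_norm_smul [FiniteDimensional ℝ E] (h : Stage D U A Good)
    (hU : ∀ᶠ n in (U : Filter (ι → ℤ)), 0 ≤ n)
    (hD : (Set.Ici 0).PartiallyWellOrderedOn fun m n => n - m ∈ D m) :
    Tendsto (fun n => ‖A n‖) U atTop ∧ ∃ θ, ‖θ‖ = 1 ∧ Tendsto (fun n => ‖A n‖⁻¹ • A n) U (𝓝 θ) := by
  have hnorm : Tendsto (fun n => ‖A n‖) U atTop := tendsto_atTop.2 fun R =>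
    (Ultrafilter.frequently_iff_eventually.1 (h.frequently_lt_norm hU hD R)).mono fun _ => le_of_lt
  have hsphere : ∀ᶠ n in U, ‖A n‖⁻¹ • A n ∈ Metric.sphere (0 : E) 1 := by
    filter_upwards [hnorm.eventually_gt_atTop 0] with n hn
    simp [norm_smul, hn.ne']
  obtain ⟨θ, hθ, hlim⟩ := (isCompact_sphere (0 : E) 1).ultrafilter_le_nhds'
    (U.map fun n => ‖A n‖⁻¹ • A n) hsphere
  exact ⟨hnorm, θ, by simpa using hθ, hlim⟩

theorem map_nonneg_of_tendsto [FiniteDimensional ℝ E] (hU : ∀ᶠ n in (U : Filter (ι → ℤ)), 0 ≤ n)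
    (hθ : Tendsto (fun n => ‖A n‖⁻¹ • A n) U (𝓝 θ)) {j : ι} {l : E →ₗ[ℝ] ℝ}
    (hl : ∀ x, (x j : ℝ) = l (A x)) : 0 ≤ l θ := by
  refine ge_of_tendsto ((LinearMap.continuous_of_finiteDimensional l).tendsto θ |>.comp hθ) ?_
  filter_upwards [hU] with n hn
  rw [Function.comp_apply, map_smul, ← hl, smul_eq_mul]
  exact mul_nonneg (by positivity) (by exact_mod_cast hn j)

theorem eventually_forall_exists_nonneg [Finite ι] [FiniteDimensional ℝ E] (h : Stage D U A Good)
    (hpos : ∀ (j : ι) (l : E →ₗ[ℝ] ℝ), (∀ x, (x j : ℝ) = l (A x)) → 0 ≤ l θ) :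
    ∀ᶠ ε in 𝓝[>] (0 : ℝ), ∀ x, ∀ t : ℝ, 0 ≤ t → ‖A x - t • θ‖ < ε →
      ∃ y, 0 ≤ y ∧ A y = A x := by
  obtain ⟨w, hw, hwj⟩ := h.exists_pos_or_functional
  have hcoord : ∀ᶠ ε in 𝓝[>] (0 : ℝ), ∀ j, 0 < w j ∨
      w j = 0 ∧ ∀ x, ∀ t : ℝ, 0 ≤ t → ‖A x - t • θ‖ < ε → 0 ≤ x j := by
    refine eventually_all.2 fun j => ?_
    rcases hwj j with hj | ⟨l, hl⟩
    · exact .of_forall fun _ => .inl hj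
    filter_upwards [eventually_forall_norm_lt_abs_map_lt l one_pos] with ε hε
    refine .inr ⟨by simpa [hw] using hl w, fun x t ht hx => ?_⟩
    have hlt := (abs_lt.1 (hε _ hx)).1
    rw [map_sub, map_smul, smul_eq_mul, ← hl] at hlt
    have : (-1 : ℝ) < x j := by linarith [mul_nonneg ht (hpos j l hl)]
    exact Int.lt_iff_add_one_le.1 (by exact_mod_cast this)
  filter_upwards [hcoord] with ε hε x t ht hx
  obtain ⟨K, hK⟩ := exists_forall_pos_add_nsmul x w
  refine ⟨x + K • w, fun j => ?_, by rw [map_add, map_nsmul, hw, smul_zero, add_zero]⟩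
  rcases hε j with hj | ⟨hwj, hnonneg⟩
  · exact (hK j hj).le
  · simpa [hwj] using hnonneg x t ht hx

theorem exists_good_map_sub_eq (h : Stage D U A Good) {b y z : ι → ℤ} (hb : b ∈ Good) (hy : 0 ≤ y)
    (hyS : A y ∈ S) (hzS : A z ∈ S) {e : ℕ} (he : 0 < e) :
    ∃ m', (m' ∈ Good ∧ ∃ z', A z' ∈ S ∧ b + e • z = m' + e • z') ∧
      ∀ m, A (m' - m) = A (b - m) + e • A y := by
  obtain ⟨m', hm', z', hz', hm'b⟩ := h.exists_good (b + e • y)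
    (add_nonneg (h.nonneg b hb) (nsmul_nonneg hy e)) e he
  obtain rfl := eq_sub_of_add_eq hm'b.symm
  refine ⟨_, ⟨hm', z + z' - y, ?_, by rw [smul_sub, smul_add]; abel⟩, fun m => ?_⟩
  · rw [map_sub, map_add, hz', add_zero]
    exact S.sub_mem hzS hyS
  · rw [show b + e • y - e • z' - m = b - m + e • y - e • z' by abel, map_sub, map_add, map_nsmul,
      map_nsmul, hz', smul_zero, sub_zero]

theorem exists_forall_map_sub_neg [Finite ι] [FiniteDimensional ℝ E] (h : Stage D U A Good)
    (hS : ∀ᶠ ε in 𝓝[>] 0, Submodule.span ℝ (A '' nearLine A θ ε) = S)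
    (hpos : ∀ (j : ι) (l : E →ₗ[ℝ] ℝ), (∀ x, (x j : ℝ) = l (A x)) → 0 ≤ l θ) {n : ι → ℤ}
    (hn : 0 ≤ n) {e : ℕ} (he : 0 < e) (l : (ι → ℤ) → E →ₗ[ℝ] ℝ) (L : List (ι → ℤ))
    (hL : ∀ m ∈ L, m ∈ Good ∧ ∃ z, A z ∈ S ∧ n = m + e • z)
    (hl : ∀ m ∈ L, (∃ x ∈ S, l m x ≠ 0) ∧ l m θ ≤ 0)
    (hpw : L.Pairwise fun b m => l m (A (b - m)) < 0) :
    ∃ m', (m' ∈ Good ∧ ∃ z, A z ∈ S ∧ n = m' + e • z) ∧ ∀ m ∈ L, l m (A (m' - m)) < 0 := by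
  classical
  rcases L with _ | ⟨b, L⟩
  · obtain ⟨m, hm, z, hz, hnm⟩ := h.exists_good n hn e he
    exact ⟨m, ⟨hm, z, hz ▸ S.zero_mem, hnm⟩, by simp⟩
  obtain ⟨hbL, -⟩ := List.pairwise_cons.1 hpw
  obtain ⟨hb, z, hz, rfl⟩ := hL b List.mem_cons_self
  have he' : (0 : ℝ) < e := by exact_mod_cast he
  have hsmall : ∀ᶠ ε in 𝓝[>] (0 : ℝ), ∀ m ∈ L.toFinset, ∀ v, ‖v‖ < ε →
      |l m v| < -l m (A (b - m)) / e := (eventually_all_finset _).2 fun m hm =>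
    eventually_forall_norm_lt_abs_map_lt _ (div_pos (neg_pos.2 (hbL m (by simpa using hm))) he')
  obtain ⟨ε, ⟨⟨hε, hspan⟩, hnonneg⟩, hε0⟩ :=
    (((hsmall.and hS).and (h.eventually_forall_exists_nonneg hpos)).and self_mem_nhdsWithin).exists
  obtain ⟨x, t, ht, hx, hlx⟩ := exists_nonneg_norm_map_sub_smul_lt_map_neg hS
    (h.span_range ▸ Submodule.mem_top) (hl b List.mem_cons_self).1 (hl b List.mem_cons_self).2 hε0
  obtain ⟨y, hy, hyx⟩ := hnonneg x t ht hx
  have hxS : A x ∈ S := hspan ▸ Submodule.subset_span ⟨x, ⟨t, hx⟩, rfl⟩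
  obtain ⟨m', hm', hAm'⟩ := h.exists_good_map_sub_eq hb hy (hyx ▸ hxS) hz he
  refine ⟨m', hm', fun m hm => ?_⟩
  rw [hAm', hyx, map_add, map_nsmul, nsmul_eq_mul]
  rcases List.mem_cons.1 hm with rfl | hmL
  · simpa using mul_neg_of_pos_of_neg he' hlx
  · have hlt := (abs_lt.1 (hε m (by simpa using hmL) _ hx)).2
    rw [lt_div_iff₀' he', map_sub, map_smul, smul_eq_mul] at hlt
    have := mul_nonneg he'.le (mul_nonneg ht (neg_nonneg.2 (hl m hm).2))
    linarith

theorem exists_containsDirection [Finite ι] [FiniteDimensional ℝ E] (h : Stage D U A Good)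
    (hD : (Set.Ici 0).PartiallyWellOrderedOn fun m n => n - m ∈ D m)
    (hS : ∀ᶠ ε in 𝓝[>] 0, Submodule.span ℝ (A '' nearLine A θ ε) = S)
    (hpos : ∀ (j : ι) (l : E →ₗ[ℝ] ℝ), (∀ x, (x j : ℝ) = l (A x)) → 0 ≤ l θ) {n : ι → ℤ}
    (hn : 0 ≤ n) {e : ℕ} (he : 0 < e) :
    ∃ m ∈ Good, ContainsDirection A S θ (D m) ∧ ∃ z, A z ∈ S ∧ n = m + e • z := by
  by_contra! hcon
  have hθ : θ ∈ S := mem_of_eventually_span_image_nearLine_eq hS (h.span_range ▸ Submodule.mem_top)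
  choose! l hl using fun m (hm : m ∈ Good ∧ ∃ z, A z ∈ S ∧ n = m + e • z) =>
    (containsDirection_or_exists_functional_nonneg (N := D m) hθ).resolve_left fun hc =>
      hm.2.elim fun z hz => hcon m hm.1 hc z hz.1 hz.2
  obtain ⟨f, hf, hneg⟩ := exists_seq_of_forall_list_exists fun L hL hpw =>
    h.exists_forall_map_sub_neg hS hpos hn he l L hL
      (fun m hm => ⟨(hl m (hL m hm)).1, (hl m (hL m hm)).2.1⟩) hpw
  obtain ⟨j, k, hjk, hmem⟩ := hD.exists_lt (f := f) fun i => h.nonneg _ (hf i).1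
  refine (hneg hjk).not_ge ((hl _ (hf j)).2.2 _ hmem ?_)
  obtain ⟨-, z, hz, hnj⟩ := hf j
  obtain ⟨-, z', hz', hnk⟩ := hf k
  rw [show f k - f j = e • z - e • z' by rw [eq_sub_of_add_eq hnk.symm, hnj]; abel, map_sub,
    map_nsmul, map_nsmul]
  exact S.sub_mem (S.nsmul_mem hz e) (S.nsmul_mem hz' e)

end Stage

section BoundedRepresentatives

variable {M E : Type*} [AddCommGroup M] [NormedAddCommGroup E] [NormedSpace ℝ E]
  {N : AddSubmonoid M}

theorem ProperModulo.exists_mem_closure_sub_mem_norm_le {F : Type*} [SeminormedAddCommGroup F]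
    {A : M →+ E} (hA : ProperModulo A (kerClosure A N)) (B : M →+ F) {G : Finset M}
    (hG : ↑G ⊆ (N : Set M)) :
    ∃ C : ℝ, ∀ x, ∀ g ∈ AddSubmonoid.closure (G : Set M), x - g ∈ kerClosure A N →
      ∃ g', (g' ∈ AddSubmonoid.closure (G : Set M) ∧ x - g' ∈ kerClosure A N) ∧
        ‖B g'‖ ≤ C * (1 + ‖A x‖) := by
  obtain ⟨C, hC⟩ := exists_mem_closure_map_eq_norm_le A B
    (hA.range_inter_closedBall_finite kerClosure_le_ker) G
  refine ⟨C, fun x g hg hxg => ?_⟩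
  obtain ⟨g', hg', ⟨k, hk, rfl⟩, hAg, hbound⟩ := hC g hg
  have hkN : k ∈ kerClosure A N :=
    mem_kerClosure (AddSubmonoid.closure_le.2 hG hk) (by simpa using hAg)
  have hAx : A x = A (k + g') := sub_eq_zero.1 (map_sub A x _ ▸ kerClosure_le_ker hxg)
  refine ⟨g', ⟨hg', ?_⟩, hAx ▸ hbound⟩
  rw [show x - g' = x - (k + g') + k by abel]
  exact add_mem hxg hkN

theorem exists_tendsto_inv_norm_smul_zero {U : Filter M} [U.NeBot] {A : M →+ E} {S : Submodule ℝ E}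
    {θ : E} [IsClosed (S : Set E)] (hθ : θ ∈ S) (hnorm : Tendsto (fun n => ‖A n‖) U atTop)
    (hlim : Tendsto (fun n => ‖A n‖⁻¹ • A n) U (𝓝 θ))
    (hA : ProperModulo (S.mkQ.toAddMonoidHom.comp A)
      (kerClosure (S.mkQ.toAddMonoidHom.comp A) N)) (m : M) {G : Finset M} (hG : ↑G ⊆ (N : Set M))
    (hU : ∀ᶠ n in U, ∃ g ∈ AddSubmonoid.closure (G : Set M),
      n - m - g ∈ kerClosure (S.mkQ.toAddMonoidHom.comp A) N) :
    ∃ g : M → M, Tendsto (fun n => ‖A n‖⁻¹ • A (g n)) U (𝓝 0) ∧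
      ∀ᶠ n in U, g n ∈ AddSubmonoid.closure (G : Set M) ∧
        n - m - g n ∈ kerClosure (S.mkQ.toAddMonoidHom.comp A) N := by
  obtain ⟨C, hC⟩ := hA.exists_mem_closure_sub_mem_norm_le A hG
  obtain ⟨g, hg⟩ := (hU.mono fun n ⟨g, hg, hng⟩ => hC (n - m) g hg hng).choice
  refine ⟨g, squeeze_zero_norm' (a := fun n =>
    C * (‖A n‖⁻¹ + ‖‖A n‖⁻¹ • A n - θ - ‖A n‖⁻¹ • A m‖)) ?_ ?_, hg.mono fun _ => And.left⟩
  · filter_upwards [hg, hnorm.eventually_gt_atTop 0] with n hn hpos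
    have hmk : S.mkQ (A (n - m)) = S.mkQ (‖A n‖ • (‖A n‖⁻¹ • A n - θ - ‖A n‖⁻¹ • A m)) := by
      refine (Submodule.Quotient.eq S).2 ?_
      rw [smul_sub, smul_sub, smul_inv_smul₀ hpos.ne', smul_inv_smul₀ hpos.ne', map_sub]
      rw [show A n - A m - (A n - ‖A n‖ • θ - A m) = ‖A n‖ • θ by abel]
      exact S.smul_mem _ hθ
    have hle : ‖S.mkQ (A (n - m))‖ ≤ ‖A n‖ * ‖‖A n‖⁻¹ • A n - θ - ‖A n‖⁻¹ • A m‖ := by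
      rw [hmk, ← norm_norm (A n), ← norm_smul, norm_norm]
      exact Submodule.Quotient.norm_mk_le S _
    have hC0 : 0 ≤ C := nonneg_of_mul_nonneg_left ((norm_nonneg _).trans hn.2) (by positivity)
    rw [norm_smul, norm_inv, norm_norm, inv_mul_le_iff₀ hpos, mul_left_comm, mul_add,
      mul_inv_cancel₀ hpos.ne']
    exact hn.2.trans (mul_le_mul_of_nonneg_left (add_le_add_right hle 1) hC0)
  · have hinv : Tendsto (fun n => ‖A n‖⁻¹) U (𝓝 0) := tendsto_inv_atTop_zero.comp hnorm
    simpa using (hinv.add ((hlim.sub_const θ).sub (hinv.smul_const (A m))).norm).const_mul C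

end BoundedRepresentatives

namespace Stage

variable {ι E : Type*} [NormedAddCommGroup E] [NormedSpace ℝ E]
  {D : (ι → ℤ) → AddSubmonoid (ι → ℤ)} {U : Ultrafilter (ι → ℤ)}
  {A : (ι → ℤ) →+ E} {Good : Set (ι → ℤ)} {S : Submodule ℝ E} {θ : E}

theorem exists_pos_or_functional_mkQ [Finite ι] [FiniteDimensional ℝ E] (h : Stage D U A Good)
    (hS : ∀ᶠ ε in 𝓝[>] 0, Submodule.span ℝ (A '' nearLine A θ ε) = S)
    (hpos : ∀ (j : ι) (l : E →ₗ[ℝ] ℝ), (∀ x, (x j : ℝ) = l (A x)) → 0 ≤ l θ) :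
    ∃ w, S.mkQ (A w) = 0 ∧
      ∀ j, 0 < w j ∨ ∃ l : E ⧸ S →ₗ[ℝ] ℝ, ∀ x, (x j : ℝ) = l (S.mkQ (A x)) := by
  have hθ : θ ∈ Submodule.span ℝ (Set.range A) := h.span_range ▸ Submodule.mem_top
  obtain ⟨w, hw, hwj⟩ := h.exists_pos_or_functional
  have hcoord : ∀ᶠ ε in 𝓝[>] (0 : ℝ), ∀ j, 0 < w j ∨
      w j = 0 ∧ ((∀ x, ∀ t : ℝ, 1 ≤ t → ‖A x - t • θ‖ < ε → 0 < x j) ∨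
        ∃ l : E ⧸ S →ₗ[ℝ] ℝ, ∀ x, (x j : ℝ) = l (S.mkQ (A x))) := by
    refine eventually_all.2 fun j => ?_
    rcases hwj j with hj | ⟨l, hl⟩
    · exact .of_forall fun _ => .inl hj
    have hwj0 : w j = 0 := by simpa [hw] using hl w
    rcases (hpos j l hl).lt_or_eq with hlθ | hlθ
    · filter_upwards [eventually_forall_norm_lt_abs_map_lt l hlθ] with ε hε
      refine .inr ⟨hwj0, .inl fun x t ht hx => ?_⟩
      have hlt := (abs_lt.1 (hε _ hx)).1
      rw [map_sub, map_smul, smul_eq_mul, ← hl] at hlt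
      have : (0 : ℝ) < x j := by nlinarith
      exact_mod_cast this
    · have hlS : S ≤ LinearMap.ker l := le_ker_of_span_image_nearLine_eq hS hθ hl hlθ.symm
      exact .of_forall fun _ => .inr ⟨hwj0, .inr ⟨S.liftQ l hlS, by simpa using hl⟩⟩
  obtain ⟨ε, ⟨hε, hspan⟩, hε0⟩ := ((hcoord.and hS).and self_mem_nhdsWithin).exists
  obtain ⟨x, t, ht, hx⟩ := exists_norm_map_sub_smul_lt A hθ hε0 1
  obtain ⟨K, hK⟩ := exists_forall_pos_add_nsmul x w
  refine ⟨x + K • w, ?_, fun j => ?_⟩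
  · rw [map_add, map_nsmul, hw, smul_zero, add_zero]
    exact (Submodule.Quotient.mk_eq_zero S).2 (hspan ▸ Submodule.subset_span ⟨x, ⟨t, hx⟩, rfl⟩)
  · rcases hε j with hj | ⟨hwj0, hj | hj⟩
    · exact .inl (hK j hj)
    · exact .inl (by simpa [hwj0] using hj x t ht hx)
    · exact .inr hj

theorem eventually_notMem_kerClosure_mkQ [Finite ι] (h : Stage D U A Good)
    [IsClosed (S : Set E)] (hθ : θ ∈ S) (hnorm : Tendsto (fun n => ‖A n‖) U atTop)
    (hlim : Tendsto (fun n => ‖A n‖⁻¹ • A n) U (𝓝 θ)) {m : ι → ℤ} (hm : m ∈ Good)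
    (hmθ : ContainsDirection A S θ (D m)) {G : Finset (ι → ℤ)} (hG : ↑G ⊆ (D m : Set (ι → ℤ))) :
    ∀ᶠ n in U, ∀ g ∈ AddSubmonoid.closure (G : Set (ι → ℤ)),
      n - m - g ∉ kerClosure (S.mkQ.toAddMonoidHom.comp A) (D m) := by
  classical
  by_contra hU
  rw [← Ultrafilter.eventually_not] at hU
  push Not at hU
  obtain ⟨g, hg0, hg⟩ := exists_tendsto_inv_norm_smul_zero hθ hnorm hlim
    (hmθ.properModulo hθ (h.proper m hm)) m hG hU
  obtain ⟨F, hF, hhull⟩ := hmθ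
  obtain ⟨d, hdS, H, hH, hx⟩ := (h.proper m hm).exists_finset_sub_mem_of_mem_hull hF
  have hcone : ∀ᶠ n in U, A (n - m - g n - d) ∈ PointedCone.hull ℝ (A '' F) := by
    have hdir : Tendsto (fun n => ‖A n‖⁻¹ • A (n - m - g n - d)) U (𝓝[S] θ) := by
      have hinv : Tendsto (fun n => ‖A n‖⁻¹) U (𝓝 0) := tendsto_inv_atTop_zero.comp hnorm
      refine tendsto_nhdsWithin_iff.2 ⟨?_, hg.mono fun n hn => S.smul_mem _ ?_⟩
      · simpa [smul_sub] using ((hlim.sub (hinv.smul_const (A m))).sub hg0).sub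
          (hinv.smul_const (A d))
      · rw [map_sub]
        exact S.sub_mem ((Submodule.Quotient.mk_eq_zero S).1 (kerClosure_le_ker hn.2)) hdS
    filter_upwards [hdir.eventually hhull, hnorm.eventually_gt_atTop 0] with n hn hpos
    simpa [smul_inv_smul₀ hpos.ne'] using
      PointedCone.smul_mem _ hpos.le hn
  obtain ⟨n, ⟨⟨hgn, hnΛ⟩, hncone⟩, hn⟩ :=
    ((hg.and hcone).and (h.avoids m hm (G ∪ H) (by simpa using ⟨hG, hH⟩))).exists
  obtain ⟨k, hk, hkΛ⟩ := hx _ hnΛ hncone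
  refine hn (g n + k) ?_ (by rwa [sub_add_eq_sub_sub])
  rw [Finset.coe_union, AddSubmonoid.closure_union]
  exact AddSubmonoid.add_mem_sup hgn hk

theorem mkQ [Finite ι] [FiniteDimensional ℝ E] [IsClosed (S : Set E)] (h : Stage D U A Good)
    (hU : ∀ᶠ n in (U : Filter (ι → ℤ)), 0 ≤ n)
    (hD : (Set.Ici 0).PartiallyWellOrderedOn fun m n => n - m ∈ D m)
    (hS : ∀ᶠ ε in 𝓝[>] 0, Submodule.span ℝ (A '' nearLine A θ ε) = S)
    (hnorm : Tendsto (fun n => ‖A n‖) U atTop)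
    (hlim : Tendsto (fun n => ‖A n‖⁻¹ • A n) U (𝓝 θ)) :
    Stage D U (S.mkQ.toAddMonoidHom.comp A) {m ∈ Good | ContainsDirection A S θ (D m)} := by
  have hpos : ∀ (j : ι) (l : E →ₗ[ℝ] ℝ), (∀ x, (x j : ℝ) = l (A x)) → 0 ≤ l θ :=
    fun _ _ => map_nonneg_of_tendsto hU hlim
  have hθ : θ ∈ S := mem_of_eventually_span_image_nearLine_eq hS (h.span_range ▸ Submodule.mem_top)
  exact
    { span_range := by
        rw [AddMonoidHom.coe_comp, Set.range_comp]
        exact (Submodule.map_span S.mkQ _).symm.trans (by rw [h.span_range, Submodule.map_top,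
          Submodule.range_mkQ])
      nonneg := fun m hm => h.nonneg m hm.1
      exists_good := fun n hn e he => by
        obtain ⟨m, hm, hmθ, z, hz, hnm⟩ := h.exists_containsDirection hD hS hpos hn he
        exact ⟨m, ⟨hm, hmθ⟩, z, (Submodule.Quotient.mk_eq_zero S).2 hz, hnm⟩
      proper := fun m hm => hm.2.properModulo hθ (h.proper m hm.1)
      avoids := fun m hm G hG => h.eventually_notMem_kerClosure_mkQ hθ hnorm hlim hm.1 hm.2 hG
      exists_pos_or_functional := h.exists_pos_or_functional_mkQ hS hpos }

theorem not_of_partiallyWellOrderedOn [Finite ι]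
    (hU : ∀ᶠ n in (U : Filter (ι → ℤ)), 0 ≤ n)
    (hD : (Set.Ici 0).PartiallyWellOrderedOn fun m n => n - m ∈ D m) {E : Type*}
    [NormedAddCommGroup E] [NormedSpace ℝ E] [FiniteDimensional ℝ E] (A : (ι → ℤ) →+ E)
    (Good : Set (ι → ℤ)) : ¬ Stage D U A Good := by
  intro h
  induction hr : Module.finrank ℝ E using Nat.strong_induction_on generalizing E Good with
  | _ r ih =>
    obtain ⟨hnorm, θ, hθ, hlim⟩ := h.exists_tendsto_inv_norm_smul hU hD
    obtain ⟨S, hS⟩ := exists_eventually_span_image_nearLine_eq A θ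
    have hθS : θ ∈ S :=
      mem_of_eventually_span_image_nearLine_eq hS (h.span_range ▸ Submodule.mem_top)
    have hS0 : S ≠ ⊥ := by
      rintro rfl
      simp [(Submodule.mem_bot ℝ).1 hθS] at hθ
    have : IsClosed (S : Set E) := S.closed_of_finiteDimensional
    have hlt : Module.finrank ℝ (E ⧸ S) < r := by
      have := S.finrank_quotient_add_finrank
      have := Submodule.one_le_finrank_iff.2 hS0
      lia
    exact ih _ hlt _ _ (h.mkQ hU hD hS hnorm hlim) rfl

end Stage

theorem exists_ultrafilter_forall_eventually_notMem {α ι : Type*} {s : ι → Set α} {p : ι → Prop}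
    {t : Set α} (h : ∀ I : Finset ι, (∀ i ∈ I, p i) → ¬ t ⊆ ⋃ i ∈ I, s i) :
    ∃ U : Ultrafilter α, t ∈ U ∧ ∀ i, p i → ∀ᶠ x in U, x ∉ s i := by
  classical
  let F : Filter α := .comk (fun u => ∃ I : Finset ι, (∀ i ∈ I, p i) ∧ t ∩ u ⊆ ⋃ i ∈ I, s i)
    ⟨∅, by simp⟩ (fun u ⟨I, hI, hu⟩ v hv => ⟨I, hI, (Set.inter_subset_inter_right t hv).trans hu⟩)
    fun u ⟨I, hI, hu⟩ v ⟨J, hJ, hv⟩ => ⟨I ∪ J, Finset.forall_mem_union.2 ⟨hI, hJ⟩, by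
      rw [Finset.set_biUnion_union, Set.inter_union_distrib_left]
      exact Set.union_subset_union hu hv⟩
  have hF : ∀ u, u ∈ F ↔ ∃ I : Finset ι, (∀ i ∈ I, p i) ∧ t ∩ uᶜ ⊆ ⋃ i ∈ I, s i := fun u =>
    Filter.mem_comk
  have : F.NeBot := ⟨fun hbot => by
    obtain ⟨I, hI, ht⟩ := (hF ∅).1 (hbot ▸ mem_bot)
    exact h I hI (by simpa using ht)⟩
  refine ⟨.of F, Ultrafilter.of_le F ((hF t).2 ⟨∅, by simp⟩), fun i hi => Ultrafilter.of_le F ?_⟩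
  exact (hF _).2 ⟨{i}, by simpa using hi, fun x hx => by simpa using not_not.1 hx.2⟩

theorem properModulo_intCast_compLeft (ι : Type*) [Fintype ι] (Λ : AddSubgroup (ι → ℤ)) :
    ProperModulo ((Int.castAddHom ℝ).compLeft ι) Λ := by
  classical
  intro R
  refine ((Set.finite_Icc (fun _ => -⌈R⌉) fun _ => ⌈R⌉).subset fun x hx => ?_).image _
  have hx : ∀ i, |(x i : ℝ)| ≤ R := fun i =>
    (norm_le_pi_norm ((Int.castAddHom ℝ).compLeft ι x) i).trans (mem_closedBall_zero_iff.1 hx)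
  have hxR : ∀ i, |x i| ≤ ⌈R⌉ := fun i => by exact_mod_cast (hx i).trans (Int.le_ceil R)
  exact ⟨fun i => (abs_le.1 (hxR i)).1, fun i => (abs_le.1 (hxR i)).2⟩

theorem span_range_intCast_compLeft (ι : Type*) [Finite ι] :
    Submodule.span ℝ (Set.range ((Int.castAddHom ℝ).compLeft ι)) = ⊤ := by
  classical
  cases nonempty_fintype ι
  rw [← (Pi.basisFun ℝ ι).span_eq]
  refine le_antisymm (by simp [(Pi.basisFun ℝ ι).span_eq]) (Submodule.span_mono ?_)
  rintro _ ⟨i, rfl⟩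
  exact ⟨Pi.single i 1, by ext j; simp [Pi.single_apply]⟩

theorem exists_finset_forall_exists_sub_mem_closure {ι : Type*} [Finite ι]
    {D : (ι → ℤ) → AddSubmonoid (ι → ℤ)}
    (hD : (Set.Ici 0).PartiallyWellOrderedOn fun m n => n - m ∈ D m) :
    ∃ C : Finset ((ι → ℤ) × Finset (ι → ℤ)),
      (∀ c ∈ C, 0 ≤ c.1 ∧ (c.2 : Set (ι → ℤ)) ⊆ D c.1) ∧
      ∀ n, 0 ≤ n → ∃ c ∈ C, n - c.1 ∈ AddSubmonoid.closure (c.2 : Set (ι → ℤ)) := by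
  cases nonempty_fintype ι
  by_contra! hcover
  obtain ⟨U, hU0, hU⟩ := exists_ultrafilter_forall_eventually_notMem (t := Set.Ici 0)
    (s := fun c : (ι → ℤ) × Finset (ι → ℤ) =>
      {n | n - c.1 ∈ AddSubmonoid.closure (c.2 : Set (ι → ℤ))})
    (p := fun c => 0 ≤ c.1 ∧ (c.2 : Set (ι → ℤ)) ⊆ D c.1) fun C hC hsub => by
      obtain ⟨n, hn, hnC⟩ := hcover C hC
      obtain ⟨c, hc, hnc⟩ := Set.mem_iUnion₂.1 (hsub hn)
      exact hnC c hc hnc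
  let A : (ι → ℤ) →+ (ι → ℝ) := (Int.castAddHom ℝ).compLeft ι
  have hA : ∀ x, A x = 0 → x = 0 := fun x hx => funext fun i => by simpa [A] using congrFun hx i
  refine Stage.not_of_partiallyWellOrderedOn hU0 hD A (Set.Ici 0)
    { span_range := span_range_intCast_compLeft ι
      nonneg := fun m hm => hm
      exists_good := fun n hn e _ => ⟨n, hn, 0, map_zero A, by simp⟩
      proper := fun m _ => properModulo_intCast_compLeft ι _
      avoids := fun m hm G hG => (hU (m, G) ⟨hm, hG⟩).mono fun n hn g hg hng => hn ?_
      exists_pos_or_functional := ⟨0, map_zero A, fun j => .inr ⟨LinearMap.proj j, fun x => rfl⟩⟩ }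
  rwa [Set.mem_ofPred_eq, sub_eq_zero.1 (hA _ (kerClosure_le_ker hng))]

theorem exists_finset_forall_exists_eq_add_mem_closure {ι : Type*} [Finite ι]
    {D : (ι → ℕ) → AddSubmonoid (ι → ℕ)}
    (hD : WellQuasiOrdered fun m n => ∃ u ∈ D m, n = m + u) :
    ∃ C : Finset ((ι → ℕ) × Finset (ι → ℕ)),
      (∀ c ∈ C, (c.2 : Set (ι → ℕ)) ⊆ D c.1) ∧
      ∀ n, ∃ c ∈ C, ∃ u ∈ AddSubmonoid.closure (c.2 : Set (ι → ℕ)), n = c.1 + u := by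
  classical
  let cast : (ι → ℕ) →+ (ι → ℤ) := (Nat.castAddMonoidHom ℤ).compLeft ι
  let toNat : (ι → ℤ) → (ι → ℕ) := fun m i => (m i).toNat
  have hcast : Function.Injective cast := fun m n h =>
    funext fun i => Int.ofNat_inj.1 (congrFun h i)
  have hcast_toNat : ∀ m, 0 ≤ m → cast (toNat m) = m := fun m hm =>
    funext fun i => Int.toNat_of_nonneg (hm i)
  obtain ⟨C, hCD, hC⟩ := exists_finset_forall_exists_sub_mem_closure
    (D := fun m => (D (toNat m)).map cast) <|
    Set.partiallyWellOrderedOn_iff_exists_lt.2 fun f hf => by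
      obtain ⟨j, k, hjk, u, hu, heq⟩ := hD fun n => toNat (f n)
      exact ⟨j, k, hjk, u, hu, by
        rw [← hcast_toNat _ (hf j), ← hcast_toNat _ (hf k), heq, map_add, add_sub_cancel_left]⟩
  choose! G hGD hG using fun c hc => Finset.subset_set_image_iff.1 (hCD c hc).2
  refine ⟨C.image fun c => (toNat c.1, G c), ?_, fun n => ?_⟩
  · exact Finset.forall_mem_image.2 hGD
  · obtain ⟨c, hc, hn⟩ := hC (cast n) fun i => Int.natCast_nonneg (n i)
    rw [← hG c hc, Finset.coe_image, ← AddMonoidHom.map_mclosure] at hn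
    obtain ⟨u, hu, heq⟩ := hn
    refine ⟨_, Finset.mem_image_of_mem _ hc, u, hu, hcast ?_⟩
    rw [map_add, heq, hcast_toNat _ (hCD c hc).1, add_sub_cancel]

/-! ### Flattable sets of pairs -/

theorem compList_append {α : Type*} {Rs Ss : List (α → α → Prop)} {x y z : α}
    (h : compList Rs x y) (h' : compList Ss y z) : compList (Rs ++ Ss) x z := by
  induction Rs generalizing x with
  | nil => exact (show x = y from h) ▸ h'
  | cons R Rs ih => exact h.imp fun _ ⟨hR, hRs⟩ => ⟨hR, ih hRs⟩

theorem compList_refl {α : Type*} {Rs : List (α → α → Prop)} {x : α} (h : ∀ R ∈ Rs, R x x) :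
    compList Rs x x := by
  induction Rs with
  | nil => rfl
  | cons R Rs ih =>
    obtain ⟨hR, hRs⟩ := List.forall_mem_cons.1 h
    exact ⟨x, hR, ih hRs⟩

theorem rel_of_compList {α : Type*} {Rs : List (α → α → Prop)} {S : α → α → Prop} [IsPreorder α S]
    (h : ∀ R ∈ Rs, R ≤ S) {x y : α} (hxy : compList Rs x y) : S x y := by
  induction Rs generalizing x with
  | nil => exact (show x = y from hxy) ▸ refl x
  | cons R Rs ih =>
    obtain ⟨z, hxz, hzy⟩ := hxy
    obtain ⟨hR, hRs⟩ := List.forall_mem_cons.1 h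
    exact _root_.trans (hR x z hxz) (ih hRs hzy)

theorem wellQuasiOrdered_sum_liftRel {α β : Type*} {r : α → α → Prop} {s : β → β → Prop}
    (hr : WellQuasiOrdered r) (hs : WellQuasiOrdered s) : WellQuasiOrdered (Sum.LiftRel r s) := by
  rw [← Set.partiallyWellOrderedOn_univ_iff] at hr hs ⊢
  rw [← Set.range_inl_union_range_inr, ← Set.image_univ, ← Set.image_univ]
  exact (hr.image_of_monotone_on fun _ _ _ _ => .inl).union
    (hs.image_of_monotone_on fun _ _ _ _ => .inr)

/-- Composition of submonoids seen as additive relations. -/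
def relComp {M N P : Type*} [AddZeroClass M] [AddZeroClass N] [AddZeroClass P]
    (A : AddSubmonoid (M × N)) (B : AddSubmonoid (N × P)) : AddSubmonoid (M × P) where
  carrier := {p | ∃ m, (p.1, m) ∈ A ∧ (m, p.2) ∈ B}
  zero_mem' := ⟨0, A.zero_mem, B.zero_mem⟩
  add_mem' := fun ⟨m, hA, hB⟩ ⟨m', hA', hB'⟩ => ⟨m + m', A.add_mem hA hA', B.add_mem hB hB'⟩

/-- The diagonal of a submonoid. -/
def diagonal {M : Type*} [AddZeroClass M] (S : AddSubmonoid M) : AddSubmonoid (M × M) :=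
  S.map ((AddMonoidHom.id M).prod (.id M))

namespace PVAS

variable {d : ℕ}

/-- The configurations passing a zero test of level `k`. -/
def zeroBelow (d k : ℕ) : AddSubmonoid (NVec d) where
  carrier := {x | ∀ j : Fin d, (j : ℕ) < k → x j = 0}
  zero_mem' := fun _ _ => rfl
  add_mem' := fun hx hy j hj => by simp [hx j hj, hy j hj]

theorem mem_zeroBelow_of_add_left {k : ℕ} {x y : NVec d} (h : x + y ∈ zeroBelow d k) :
    y ∈ zeroBelow d k :=
  fun j hj => (add_eq_zero.1 (h j hj)).2

variable {V : PVAS d} {k : ℕ}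

section Flat

variable (V)

/-- The relation `→_{w₁}* ∘ … ∘ →_{w_r}*` attached to a list of words. -/
def Flat (ws : List (List V.E)) : NVec d → NVec d → Prop :=
  compList (ws.map fun w => Relation.ReflTransGen (V.StepWord w))

variable {V} {ws ws' : List (List V.E)} {x y z : NVec d}

theorem Flat.refl (ws : List (List V.E)) (x : NVec d) : V.Flat ws x x :=
  compList_refl <| List.forall_mem_map.2 fun _ _ => .refl

theorem Flat.append (h : V.Flat ws x y) (h' : V.Flat ws' y z) : V.Flat (ws ++ ws') x z := by
  rw [Flat, List.map_append]
  exact compList_append h h'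

theorem Flat.single {w : List V.E} (h : Relation.ReflTransGen (V.StepWord w) x y) :
    V.Flat [w] x y :=
  ⟨y, h, rfl⟩

theorem StepWord.reach {w : List V.E} (h : V.StepWord w x y) : V.Reach x y := by
  induction w generalizing x with
  | nil => exact (show x = y from h) ▸ .refl
  | cons e w ih =>
    obtain ⟨z, he, hw⟩ := h
    exact .head ⟨e, he⟩ (ih hw)

theorem Flat.reach (h : V.Flat ws x y) : V.Reach x y := by
  have : IsPreorder (NVec d) V.Reach := { refl := fun _ => .refl, trans := fun _ _ _ => .trans }
  exact rel_of_compList (S := V.Reach) (List.forall_mem_map.2 fun w _ _ _ hw =>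
    Relation.reflTransGen_closed (p := V.Step) (fun _ _ => StepWord.reach) _ _ hw) h

variable (V) in
/-- A set of pairs of configurations is flattable if one list of words relates all its pairs. -/
def Flattable (A : Set (NVec d × NVec d)) : Prop :=
  ∃ ws : List (List V.E), ∀ q ∈ A, V.Flat ws q.1 q.2

theorem Flattable.mono {A B : Set (NVec d × NVec d)} (hB : V.Flattable B) (h : A ⊆ B) :
    V.Flattable A :=
  hB.imp fun _ hws q hq => hws q (h hq)

theorem Flattable.union {A B : Set (NVec d × NVec d)} (hA : V.Flattable A) (hB : V.Flattable B) :
    V.Flattable (A ∪ B) := by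
  obtain ⟨ws, hws⟩ := hA
  obtain ⟨ws', hws'⟩ := hB
  refine ⟨ws ++ ws', fun q hq => hq.elim (fun hqA => ?_) fun hqB => ?_⟩
  · exact (hws q hqA).append (.refl ws' q.2)
  · exact (Flat.refl ws q.1).append (hws' q hqB)

theorem flattable_biUnion {α : Type*} {s : Set α} (hs : s.Finite)
    {A : α → Set (NVec d × NVec d)} (h : ∀ a ∈ s, V.Flattable (A a)) :
    V.Flattable (⋃ a ∈ s, A a) := by
  induction s, hs using Set.Finite.induction_on with
  | empty => exact ⟨[], by simp⟩
  | insert _ _ ih =>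
    rw [Set.biUnion_insert]
    exact (h _ (Set.mem_insert _ _)).union (ih fun a ha => h a (Set.mem_insert_of_mem _ ha))

end Flat

section Below

theorem StepE.add_right {e : V.E} {x y z : NVec d} (h : V.StepE e x y)
    (hz : z ∈ zeroBelow d (V.test e)) : V.StepE e (x + z) (y + z) :=
  ⟨fun j hj => by simp [h.1 j hj, hz j hj], fun i => by
    rw [Pi.add_apply, Pi.add_apply, Nat.cast_add, Nat.cast_add, h.2 i, add_right_comm]⟩

theorem StepE.eq_add_of_add_right {e : V.E} {x y x' u : NVec d} (h : V.StepE e x y)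
    (h' : V.StepE e x' (y + u)) : x' = x + u := by
  funext i
  have hi := h.2 i
  have hi' := h'.2 i
  rw [Pi.add_apply] at hi' ⊢
  omega

theorem StepWord.add_right {w : List V.E} {x y z : NVec d} (h : V.StepWord w x y)
    (hw : ∀ e ∈ w, z ∈ zeroBelow d (V.test e)) : V.StepWord w (x + z) (y + z) := by
  induction w generalizing x with
  | nil => exact congrArg (· + z) h
  | cons e w ih =>
    obtain ⟨m, he, hm⟩ := h
    obtain ⟨hez, hwz⟩ := List.forall_mem_cons.1 hw
    exact ⟨m + z, he.add_right hez, ih hm hwz⟩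

variable (V) in
/-- One step along an edge of test level less than `k`. -/
def StepBelow (k : ℕ) (x y : NVec d) : Prop := ∃ e, V.test e < k ∧ V.StepE e x y

variable (V) in
/-- One step along an edge of test level exactly `k`. -/
def StepAt (k : ℕ) (x y : NVec d) : Prop := ∃ e, V.test e = k ∧ V.StepE e x y

variable (V) in
/-- Reachability along edges of test level less than `k`. -/
def ReachBelow (k : ℕ) : NVec d → NVec d → Prop := Relation.ReflTransGen (V.StepBelow k)

variable {x y z : NVec d}

theorem StepAt.mem_zeroBelow (h : V.StepAt k x y) : x ∈ zeroBelow d k := by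
  obtain ⟨e, rfl, he⟩ := h
  exact he.1

theorem zeroBelow_anti : Antitone (zeroBelow d) :=
  fun _ _ hkl _ hx j hj => hx j (hj.trans_le hkl)

theorem ReachBelow.mono {l : ℕ} (hkl : k ≤ l) (h : V.ReachBelow k x y) : V.ReachBelow l x y :=
  Relation.ReflTransGen.mono (fun _ _ => Exists.imp fun _ => And.imp_left (·.trans_le hkl)) _ _ h

theorem ReachBelow.trans (h : V.ReachBelow k x y) (h' : V.ReachBelow k y z) : V.ReachBelow k x z :=
  Relation.ReflTransGen.trans h h'

theorem ReachBelow.exists_stepWord (h : V.ReachBelow k x y) :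
    ∃ w, (∀ e ∈ w, V.test e < k) ∧ V.StepWord w x y := by
  induction h using Relation.ReflTransGen.head_induction_on with
  | refl => exact ⟨[], by simp, rfl⟩
  | head hstep _ ih =>
    obtain ⟨e, he, hstep⟩ := hstep
    obtain ⟨w, hw, hreach⟩ := ih
    exact ⟨e :: w, List.forall_mem_cons.2 ⟨he, hw⟩, _, hstep, hreach⟩

theorem ReachBelow.add_right (h : V.ReachBelow (k + 1) x y) (hz : z ∈ zeroBelow d k) :
    V.ReachBelow (k + 1) (x + z) (y + z) :=
  Relation.ReflTransGen.lift (· + z) (fun _ _ => Exists.imp fun _ ⟨he, hstep⟩ =>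
    ⟨he, hstep.add_right (zeroBelow_anti (Nat.le_of_lt_succ he) hz)⟩) x y h

theorem reachBelow_eq_reach : V.ReachBelow (d + 1) = V.Reach := by
  have : V.StepBelow (d + 1) = V.Step := by
    ext x y
    exact exists_congr fun e => and_iff_right (Nat.lt_succ_of_le (V.test_le e))
  rw [ReachBelow, Reach, this]

theorem stepBelow_succ_iff : V.StepBelow (k + 1) x y ↔ V.StepBelow k x y ∨ V.StepAt k x y := by
  simp only [StepBelow, StepAt, Nat.lt_succ_iff_lt_or_eq, or_and_right, exists_or]

end Below

variable (V) in
/-- Finitely generated parts of the directions `D` can be flattened along with the pair `(x, y)`: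
for each finite `G ⊆ D`, one list of words relates all `x + q.1` and `y + q.2` with `q` in the
submonoid generated by `G`. -/
def Accelerable (x y : NVec d) (D : AddSubmonoid (NVec d × NVec d)) : Prop :=
  ∀ G : Finset (NVec d × NVec d), (G : Set (NVec d × NVec d)) ⊆ D →
    ∃ ws, ∀ q ∈ AddSubmonoid.closure (G : Set (NVec d × NVec d)), V.Flat ws (x + q.1) (y + q.2)

section Accelerable

theorem accelerable_of_forall_flat {x y : NVec d} {D : AddSubmonoid (NVec d × NVec d)}
    {ws : List (List V.E)} (h : ∀ q ∈ D, V.Flat ws (x + q.1) (y + q.2)) : V.Accelerable x y D :=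
  fun _ hG => ⟨ws, fun q hq => h q (AddSubmonoid.closure_le.2 hG hq)⟩

theorem Accelerable.comp {x y z : NVec d} {A B : AddSubmonoid (NVec d × NVec d)}
    (hA : V.Accelerable x y A) (hB : V.Accelerable y z B) : V.Accelerable x z (relComp A B) := by
  classical
  intro G hG
  choose! m hmA hmB using show ∀ g ∈ G, ∃ m, (g.1, m) ∈ A ∧ (m, g.2) ∈ B from fun g hg => hG hg
  obtain ⟨ws, hws⟩ := hA (G.image fun g => (g.1, m g)) <| by
    rwa [Finset.coe_image, Set.image_subset_iff]
  obtain ⟨ws', hws'⟩ := hB (G.image fun g => (m g, g.2)) <| by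
    rwa [Finset.coe_image, Set.image_subset_iff]
  refine ⟨ws ++ ws', fun q hq => ?_⟩
  have hle : AddSubmonoid.closure (G : Set (NVec d × NVec d)) ≤
      relComp (.closure (G.image fun g => (g.1, m g))) (.closure (G.image fun g => (m g, g.2))) :=
    AddSubmonoid.closure_le.2 fun g hg => ⟨m g,
      AddSubmonoid.subset_closure (Finset.mem_image_of_mem _ hg),
      AddSubmonoid.subset_closure (Finset.mem_image_of_mem _ hg)⟩
  obtain ⟨n, hn, hn'⟩ := hle hq
  exact (hws _ hn).append (hws' _ hn')

theorem StepE.accelerable {e : V.E} {x y : NVec d} (h : V.StepE e x y) :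
    V.Accelerable x y (diagonal (zeroBelow d (V.test e))) :=
  accelerable_of_forall_flat (ws := [[e]]) <| by
    rintro _ ⟨z, hz, rfl⟩
    exact ⟨_, .single ⟨_, h.add_right hz, rfl⟩, rfl⟩

variable (V) in
/-- The pairs that can be added to the configuration `c`, below a zero test of level `k`, so that
the second sum is reachable from the first without any test of level above `k`. -/
def pumps (k : ℕ) (c : NVec d) : AddSubmonoid (NVec d × NVec d) where
  carrier := {p | p.1 ∈ zeroBelow d k ∧ p.2 ∈ zeroBelow d k ∧
    V.ReachBelow (k + 1) (c + p.1) (c + p.2)}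
  zero_mem' := ⟨zero_mem _, zero_mem _, .refl⟩
  add_mem' := fun {p q} ⟨hp₁, hp₂, hp⟩ ⟨hq₁, hq₂, hq⟩ => by
    refine ⟨add_mem hp₁ hq₁, add_mem hp₂ hq₂, ?_⟩
    have hq' := hq.add_right hp₂
    simp only [add_right_comm c _ p.2] at hq'
    simpa only [Prod.fst_add, Prod.snd_add, add_assoc] using (hp.add_right hq₁).trans hq'

theorem reflTransGen_stepWord_add_nsmul {w : List V.E} (hw : ∀ e ∈ w, V.test e < k + 1)
    {c u v z : NVec d} (hu : u ∈ zeroBelow d k) (hv : v ∈ zeroBelow d k)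
    (hstep : V.StepWord w (c + u) (c + v)) (n : ℕ) (hz : z ∈ zeroBelow d k) :
    Relation.ReflTransGen (V.StepWord w) (c + n • u + z) (c + n • v + z) := by
  induction n generalizing z with
  | zero => simpa only [zero_smul] using .refl
  | succ n ih =>
    have hfirst : V.StepWord w (c + u + (n • u + z)) (c + v + (n • u + z)) :=
      hstep.add_right fun e he =>
        zeroBelow_anti (Nat.le_of_lt_succ (hw e he)) (add_mem (nsmul_mem hu n) hz)
    have hrest := ih (add_mem hv hz)
    rw [show c + (n + 1) • u + z = c + u + (n • u + z) by module]
    rw [show c + n • u + (v + z) = c + v + (n • u + z) by module] at hrest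
    rw [show c + (n + 1) • v + z = c + n • v + (v + z) by module]
    exact .head hfirst hrest

/-- A combination of pumps is run one generator at a time, each word being iterated on top of the
contribution of the other generators: hence the extra summand `z`. -/
theorem exists_flat_add_of_subset_pumps {c : NVec d} {G : Finset (NVec d × NVec d)}
    (hG : (G : Set (NVec d × NVec d)) ⊆ V.pumps k c) :
    ∃ ws, ∀ z ∈ zeroBelow d k, ∀ q ∈ AddSubmonoid.closure (G : Set (NVec d × NVec d)),
      V.Flat ws (c + q.1 + z) (c + q.2 + z) := by
  classical
  induction G using Finset.induction_on with
  | empty => exact ⟨[], fun z _ q hq => by simp_all [Flat.refl]⟩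
  | insert g G _ ih =>
    rw [Finset.coe_insert, Set.insert_subset_iff] at hG
    obtain ⟨⟨hg₁, hg₂, hreach⟩, hG⟩ := hG
    obtain ⟨w, hw, hstep⟩ := hreach.exists_stepWord
    obtain ⟨ws, hws⟩ := ih hG
    refine ⟨w :: ws, fun z hz q hq => ?_⟩
    rw [Finset.coe_insert, Set.insert_eq, AddSubmonoid.closure_union] at hq
    obtain ⟨_, hg, h, hh, rfl⟩ := AddSubmonoid.mem_sup.1 hq
    obtain ⟨n, rfl⟩ := AddSubmonoid.mem_closure_singleton.1 hg
    have hh₁ : h.1 ∈ zeroBelow d k := (AddSubmonoid.closure_le.2 hG hh).1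
    refine ⟨c + n • g.2 + (h.1 + z), ?_, ?_⟩
    · convert reflTransGen_stepWord_add_nsmul hw hg₁ hg₂ hstep n (add_mem hh₁ hz) using 1
      simp [add_assoc]
    · convert hws (n • g.2 + z) (add_mem (nsmul_mem hg₂ n) hz) h hh using 1
      all_goals simp [add_assoc, add_left_comm, Flat]

theorem accelerable_pumps (c : NVec d) : V.Accelerable c c (V.pumps k c) := fun _ hG =>
  (exists_flat_add_of_subset_pumps hG).imp fun _ hws q hq => by
    simpa using hws 0 (zero_mem _) q hq

end Accelerable

/-! ### Well-quasi-ordered runs -/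

/-- A parametrisation of a relation on configurations by a well-quasi-ordered type of runs, in which
going up from a run `i` moves its endpoints along an accelerable submonoid `D i`. -/
structure Presentation (V : PVAS d) (R : NVec d → NVec d → Prop) where
  Run : Type
  le : Run → Run → Prop
  isPreorder : IsPreorder Run le
  wqo : WellQuasiOrdered le
  src : Run → NVec d
  tgt : Run → NVec d
  D : Run → AddSubmonoid (NVec d × NVec d)
  rel_iff : ∀ {x y}, R x y ↔ ∃ i, src i = x ∧ tgt i = y
  exists_mem_of_le : ∀ {i j}, le i j → ∃ p ∈ D i, src j = src i + p.1 ∧ tgt j = tgt i + p.2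
  accelerable : ∀ i, V.Accelerable (src i) (tgt i) (D i)

namespace Presentation

attribute [instance] Presentation.isPreorder

variable {R S : NVec d → NVec d → Prop}

theorem rel (P : Presentation V R) (i : P.Run) : R (P.src i) (P.tgt i) :=
  P.rel_iff.2 ⟨i, rfl, rfl⟩

/-- Transport of a presentation along an equality of relations. -/
def congr (P : Presentation V R) (h : ∀ x y, R x y ↔ S x y) : Presentation V S :=
  { P with rel_iff := (h _ _).symm.trans P.rel_iff }

variable (V) in
/-- Equality, presented by the configurations themselves. -/
def eq : Presentation V Eq where
  Run := NVec d
  le := (· ≤ ·)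
  isPreorder := inferInstance
  wqo := wellQuasiOrdered_le
  src := id
  tgt := id
  D _ := diagonal ⊤
  rel_iff := by simp
  exists_mem_of_le h :=
    let ⟨u, hu⟩ := exists_add_of_le h
    ⟨(u, u), ⟨u, trivial, rfl⟩, hu, hu⟩
  accelerable x := accelerable_of_forall_flat (ws := []) <| by
    rintro _ ⟨z, -, rfl⟩
    exact .refl _ _

variable (V k) in
/-- Steps of test level `k`, presented by their edges and endpoints. -/
def stepAt : Presentation V (V.StepAt k) where
  Run := {t : V.E × NVec d × NVec d // V.test t.1 = k ∧ V.StepE t.1 t.2.1 t.2.2}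
  le s t := s.1.1 = t.1.1 ∧ s.1.2 ≤ t.1.2
  isPreorder :=
    { refl := fun _ => ⟨rfl, le_rfl⟩
      trans := fun _ _ _ h h' => ⟨h.1.trans h'.1, h.2.trans h'.2⟩ }
  wqo f :=
    have := V.fintypeE
    ((Finite.wellQuasiOrdered (Eq (α := V.E))).prod
      (wellQuasiOrdered_le (α := NVec d × NVec d))) fun n => (f n).1
  src t := t.1.2.1
  tgt t := t.1.2.2
  D _ := diagonal (zeroBelow d k)
  rel_iff := ⟨fun ⟨e, h⟩ => ⟨⟨(e, _, _), h⟩, rfl, rfl⟩, by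
    rintro ⟨⟨⟨e, _, _⟩, h⟩, rfl, rfl⟩
    exact ⟨e, h⟩⟩
  exists_mem_of_le := by
    rintro ⟨⟨e, x, y⟩, rfl, h⟩ ⟨⟨_, x', y'⟩, _, h'⟩ ⟨rfl, _, hle⟩
    obtain ⟨u, rfl⟩ := exists_add_of_le hle
    obtain rfl := h.eq_add_of_add_right h'
    exact ⟨(u, u), ⟨u, mem_zeroBelow_of_add_left h'.1, rfl⟩, rfl, rfl⟩
  accelerable := by
    rintro ⟨⟨e, x, y⟩, rfl, h⟩
    exact h.accelerable

/-- Compositions are presented by the composable pairs of runs. -/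
def comp (P : Presentation V R) (Q : Presentation V S) : Presentation V (Relation.Comp R S) where
  Run := {t : P.Run × Q.Run // P.tgt t.1 = Q.src t.2}
  le s t := P.le s.1.1 t.1.1 ∧ Q.le s.1.2 t.1.2
  isPreorder :=
    { refl := fun _ => ⟨refl _, refl _⟩
      trans := fun _ _ _ h h' => ⟨_root_.trans h.1 h'.1, _root_.trans h.2 h'.2⟩ }
  wqo f := (P.wqo.prod Q.wqo) fun n => (f n).1
  src t := P.src t.1.1
  tgt t := Q.tgt t.1.2
  D t := relComp (P.D t.1.1) (Q.D t.1.2)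
  rel_iff {x y} := by
    simp only [Relation.Comp, P.rel_iff, Q.rel_iff]
    constructor
    · rintro ⟨_, ⟨i, rfl, rfl⟩, j, hj, rfl⟩
      exact ⟨⟨(i, j), hj.symm⟩, rfl, rfl⟩
    · rintro ⟨⟨⟨i, j⟩, h⟩, rfl, rfl⟩
      exact ⟨_, ⟨i, rfl, h⟩, j, rfl, rfl⟩
  exists_mem_of_le := by
    rintro ⟨⟨i, j⟩, h⟩ ⟨⟨i', j'⟩, h'⟩ ⟨hi, hj⟩
    obtain ⟨p, hp, hsrc, hmid⟩ := P.exists_mem_of_le hi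
    obtain ⟨q, hq, hmid', htgt⟩ := Q.exists_mem_of_le hj
    have hpq : p.2 = q.1 := add_left_cancel <| by rw [← hmid, show P.tgt i = Q.src j from h,
      ← hmid', show P.tgt i' = Q.src j' from h']
    exact ⟨(p.1, q.2), ⟨p.2, hp, hpq ▸ hq⟩, hsrc, htgt⟩
  accelerable := by
    rintro ⟨⟨i, j⟩, h⟩
    have hj := Q.accelerable j
    rw [← show P.tgt i = Q.src j from h] at hj
    exact (P.accelerable i).comp hj

/-- Unions are presented by the disjoint union of the runs. -/
def union (P : Presentation V R) (Q : Presentation V S) :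
    Presentation V fun x y => R x y ∨ S x y where
  Run := P.Run ⊕ Q.Run
  le := Sum.LiftRel P.le Q.le
  isPreorder := { refl := refl, trans := fun _ _ _ => _root_.trans }
  wqo := wellQuasiOrdered_sum_liftRel P.wqo Q.wqo
  src := Sum.elim P.src Q.src
  tgt := Sum.elim P.tgt Q.tgt
  D := Sum.elim P.D Q.D
  rel_iff := by simp [P.rel_iff, Q.rel_iff]
  exists_mem_of_le := by
    rintro _ _ (h | h)
    exacts [P.exists_mem_of_le h, Q.exists_mem_of_le h]
  accelerable := Sum.rec P.accelerable Q.accelerable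

section Star

variable {S : NVec d → NVec d → Prop} (P : Presentation V S)

/-- Consecutive runs leading from one configuration to another. -/
def Path : NVec d → List P.Run → NVec d → Prop
  | x, [], y => x = y
  | x, i :: l, y => P.src i = x ∧ Path (P.tgt i) l y

variable (k) in
/-- The directions of a path: pumps may be inserted between any two of its runs. -/
def pathD : NVec d → List P.Run → AddSubmonoid (NVec d × NVec d)
  | x, [] => V.pumps k x
  | x, i :: l => relComp (V.pumps k x) (relComp (P.D i) (pathD (P.tgt i) l))

variable {P} {x y : NVec d} {l : List P.Run}

theorem Path.reflTransGen (h : P.Path x l y) : Relation.ReflTransGen S x y := by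
  induction l generalizing x with
  | nil => exact (show x = y from h) ▸ .refl
  | cons i l ih =>
    obtain ⟨rfl, h⟩ := h
    exact .head (P.rel i) (ih h)

theorem exists_path (h : Relation.ReflTransGen S x y) : ∃ l, P.Path x l y := by
  induction h using Relation.ReflTransGen.head_induction_on with
  | refl => exact ⟨[], rfl⟩
  | head hS _ ih =>
    obtain ⟨i, rfl, rfl⟩ := P.rel_iff.1 hS
    exact ih.imp' (i :: ·) fun _ hl => ⟨rfl, hl⟩

theorem Path.accelerable (h : P.Path x l y) : V.Accelerable x y (P.pathD k x l) := by
  induction l generalizing x with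
  | nil => exact (show x = y from h) ▸ accelerable_pumps x
  | cons i l ih =>
    obtain ⟨rfl, h⟩ := h
    exact (accelerable_pumps _).comp ((P.accelerable i).comp (ih h))

theorem Path.mem_zeroBelow (hsrc : ∀ i, P.src i ∈ zeroBelow d k) (h : P.Path x l y)
    (hy : y ∈ zeroBelow d k) : x ∈ zeroBelow d k := by
  cases l with
  | nil => exact (show x = y from h) ▸ hy
  | cons i l => exact h.1 ▸ hsrc i

theorem Path.reachBelow (hS : ∀ i, V.ReachBelow (k + 1) (P.src i) (P.tgt i))
    (h : P.Path x l y) : V.ReachBelow (k + 1) x y := by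
  induction l generalizing x with
  | nil => exact (show x = y from h) ▸ .refl
  | cons i l ih =>
    obtain ⟨rfl, h⟩ := h
    exact (hS i).trans (ih h)

/-- Read along an embedding of `l` into `l'`, the runs of `l'` outside the embedding are absorbed in
pumps; `x'` is the configuration reached from `x + u` after those skipped so far. -/
theorem Path.mem_pathD (hsrc : ∀ i, P.src i ∈ zeroBelow d k)
    (hS : ∀ i, V.ReachBelow (k + 1) (P.src i) (P.tgt i)) {l' : List P.Run}
    (hle : List.SublistForall₂ P.le l l') {x' u v : NVec d} (h : P.Path x l y)
    (h' : P.Path x' l' (y + v)) (hv : y + v ∈ zeroBelow d k) (hu : x + u ∈ zeroBelow d k)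
    (hreach : V.ReachBelow (k + 1) (x + u) x') : (u, v) ∈ P.pathD k x l := by
  induction hle generalizing x x' u with
  | nil =>
    obtain rfl : x = y := h
    exact ⟨mem_zeroBelow_of_add_left hu, mem_zeroBelow_of_add_left hv,
      hreach.trans (h'.reachBelow hS)⟩
  | @cons i i' l l' hi _ ih =>
    obtain ⟨rfl, h⟩ := h
    obtain ⟨rfl, h'⟩ := h'
    obtain ⟨p, hp, hpsrc, hptgt⟩ := P.exists_mem_of_le hi
    have hmid := hpsrc ▸ hsrc i'
    rw [hptgt] at h'
    exact ⟨p.1, ⟨mem_zeroBelow_of_add_left hu, mem_zeroBelow_of_add_left hmid, hpsrc ▸ hreach⟩,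
      p.2, hp, ih h h' (h'.mem_zeroBelow hsrc hv) .refl⟩
  | @cons_right i' l l' _ ih =>
    obtain ⟨rfl, h'⟩ := h'
    exact ih h h' hu (hreach.trans (hS i'))

/-- The reflexive transitive closure of `S`, restricted to targets passing the zero test of level
`k`, is presented by the paths, ordered by Higman's embedding and by their endpoints. -/
def star (P : Presentation V S) (hsrc : ∀ i, P.src i ∈ zeroBelow d k)
    (hS : ∀ i, V.ReachBelow (k + 1) (P.src i) (P.tgt i)) :
    Presentation V fun x y => y ∈ zeroBelow d k ∧ Relation.ReflTransGen S x y where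
  Run := {t : List P.Run × NVec d × NVec d // t.2.2 ∈ zeroBelow d k ∧ P.Path t.2.1 t.1 t.2.2}
  le s t := List.SublistForall₂ P.le s.1.1 t.1.1 ∧ s.1.2 ≤ t.1.2
  isPreorder :=
    { refl := fun _ => ⟨refl _, le_rfl⟩
      trans := fun _ _ _ h h' => ⟨_root_.trans h.1 h'.1, h.2.trans h'.2⟩ }
  wqo f := by
    have hlist : WellQuasiOrdered (List.SublistForall₂ P.le) :=
      Set.partiallyWellOrderedOn_univ_iff.1 <| by
        simpa using Set.PartiallyWellOrderedOn.partiallyWellOrderedOn_sublistForall₂ P.le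
          (Set.partiallyWellOrderedOn_univ_iff.2 P.wqo)
    have : IsPreorder (List P.Run) (List.SublistForall₂ P.le) := {}
    exact (hlist.prod (wellQuasiOrdered_le (α := NVec d × NVec d))) fun n => (f n).1
  src t := t.1.2.1
  tgt t := t.1.2.2
  D t := P.pathD k t.1.2.1 t.1.1
  rel_iff {x y} := by
    constructor
    · rintro ⟨hy, h⟩
      obtain ⟨l, hl⟩ := exists_path h
      exact ⟨⟨(l, x, y), hy, hl⟩, rfl, rfl⟩
    · rintro ⟨⟨⟨l, x, y⟩, hy, h⟩, rfl, rfl⟩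
      exact ⟨hy, h.reflTransGen⟩
  exists_mem_of_le := by
    rintro ⟨⟨l, x, y⟩, hy, h⟩ ⟨⟨l', x', y'⟩, hy', h'⟩ ⟨hle, hx, hxy⟩
    obtain ⟨u, rfl⟩ := exists_add_of_le hx
    obtain ⟨v, rfl⟩ := exists_add_of_le hxy
    exact ⟨(u, v), h.mem_pathD hsrc hS hle h' hy' (h'.mem_zeroBelow hsrc hy') .refl, rfl, rfl⟩
  accelerable t := t.2.2.accelerable

end Star

end Presentation

variable (V) in
/-- A step of test level `k` followed by steps of smaller test level. -/
def Round (k : ℕ) : NVec d → NVec d → Prop := Relation.Comp (V.StepAt k) (V.ReachBelow k)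

theorem Round.mem_zeroBelow {x y : NVec d} (h : V.Round k x y) : x ∈ zeroBelow d k :=
  h.choose_spec.1.mem_zeroBelow

theorem Round.reachBelow {x y : NVec d} (h : V.Round k x y) : V.ReachBelow (k + 1) x y := by
  obtain ⟨z, hstep, hreach⟩ := h
  exact .head (stepBelow_succ_iff.2 (.inr hstep)) (hreach.mono k.le_succ)

theorem reachBelow_succ_iff {x y : NVec d} :
    V.ReachBelow (k + 1) x y ↔ V.ReachBelow k x y ∨ Relation.Comp (V.ReachBelow k)
      (Relation.Comp (fun b a => a ∈ zeroBelow d k ∧ Relation.ReflTransGen (V.Round k) b a)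
        (V.Round k)) x y := by
  constructor
  · intro h
    induction h with
    | refl => exact .inl .refl
    | tail _ hstep ih =>
      rcases stepBelow_succ_iff.1 hstep with hstep | hstep
      · refine ih.imp (·.tail hstep) ?_
        rintro ⟨b, hb, a, ha, c, hc, hreach⟩
        exact ⟨b, hb, a, ha, c, hc, hreach.tail hstep⟩
      · right
        rcases ih with hreach | ⟨b, hb, a, ⟨-, hba⟩, hround⟩
        · exact ⟨_, hreach, _, ⟨hstep.mem_zeroBelow, .refl⟩, _, hstep, .refl⟩
        · exact ⟨b, hb, _, ⟨hstep.mem_zeroBelow, hba.tail hround⟩, _, hstep, .refl⟩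
  · rintro (h | ⟨b, hb, a, ⟨-, hba⟩, hround⟩)
    · exact h.mono k.le_succ
    · exact (hb.mono k.le_succ).trans <| .trans
        (Relation.reflTransGen_closed (p := V.StepBelow _) (fun _ _ => Round.reachBelow) _ _ hba)
        hround.reachBelow

theorem nonempty_presentation_reachBelow (k : ℕ) : Nonempty (Presentation V (V.ReachBelow k)) := by
  induction k with
  | zero =>
    refine ⟨(Presentation.eq V).congr fun x y => ?_⟩
    have : V.StepBelow 0 = fun _ _ => False := by ext; simp [StepBelow]
    rw [ReachBelow, this]
    exact ⟨fun h => h ▸ .refl, fun h => h.cases_head.elim id fun ⟨_, hfalse, _⟩ => hfalse.elim⟩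
  | succ k ih =>
    obtain ⟨P⟩ := ih
    let Q : Presentation V (V.Round k) := (Presentation.stepAt V k).comp P
    let star := Q.star (k := k) (fun i => (Q.rel i).mem_zeroBelow) fun i => (Q.rel i).reachBelow
    exact ⟨(P.union (P.comp (star.comp Q))).congr fun x y => reachBelow_succ_iff.symm⟩

theorem nonempty_presentation_reach : Nonempty (Presentation V V.Reach) :=
  reachBelow_eq_reach (V := V) ▸ nonempty_presentation_reachBelow (d + 1)

theorem Presentation.wellQuasiOrdered_exists_mem_comap {R : NVec d → NVec d → Prop}
    (P : Presentation V R) {ι : Type*} [Finite ι] (b : NVec d × NVec d)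
    (φ : (ι → ℕ) →+ NVec d × NVec d) {run : (ι → ℕ) → P.Run}
    (hrun : ∀ n, b + φ n = (P.src (run n), P.tgt (run n))) :
    WellQuasiOrdered fun m n => ∃ u ∈ (P.D (run m)).comap φ, n = m + u := by
  intro f
  obtain ⟨j, l, hjl, hle, hrunle⟩ := P.wqo.prod wellQuasiOrdered_le fun n => (run (f n), f n)
  obtain ⟨u, hu⟩ := exists_add_of_le hrunle
  obtain ⟨p, hp, hsrc, htgt⟩ := P.exists_mem_of_le hle
  have : φ u = p := by
    have : b + φ (f j) + p = b + φ (f j) + φ u := by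
      rw [add_assoc b _ (φ u), ← map_add, ← hu, hrun, hrun]
      exact Prod.ext hsrc.symm htgt.symm
    exact (add_left_cancel this).symm
  exact ⟨j, l, hjl, u, AddSubmonoid.mem_comap.2 (this ▸ hp), hu⟩

theorem flattable_range_add {ι : Type*} [Finite ι] (b : NVec d × NVec d)
    (φ : (ι → ℕ) →+ NVec d × NVec d) (h : ∀ n, V.Reach (b + φ n).1 (b + φ n).2) :
    V.Flattable (Set.range fun n => b + φ n) := by
  classical
  obtain ⟨P⟩ := nonempty_presentation_reach (V := V)
  choose run hsrc htgt using fun n => P.rel_iff.1 (h n)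
  have hrun : ∀ n, b + φ n = (P.src (run n), P.tgt (run n)) := fun n =>
    Prod.ext (hsrc n).symm (htgt n).symm
  obtain ⟨C, hCD, hC⟩ := exists_finset_forall_exists_eq_add_mem_closure
    (P.wellQuasiOrdered_exists_mem_comap b φ hrun)
  let A : (ι → ℕ) × Finset (ι → ℕ) → Set (NVec d × NVec d) := fun c =>
    (fun u => b + φ (c.1 + u)) '' AddSubmonoid.closure (c.2 : Set (ι → ℕ))
  refine (flattable_biUnion C.finite_toSet (A := A) fun c hc => ?_).mono ?_
  · obtain ⟨ws, hws⟩ := P.accelerable (run c.1) (c.2.image φ) <| by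
      rw [Finset.coe_image, Set.image_subset_iff]
      exact hCD c hc
    refine ⟨ws, ?_⟩
    rintro _ ⟨u, hu, rfl⟩
    have hφu : φ u ∈ AddSubmonoid.closure (c.2.image φ : Set (NVec d × NVec d)) := by
      rw [Finset.coe_image, ← AddMonoidHom.map_mclosure]
      exact ⟨u, hu, rfl⟩
    simpa only [map_add, ← add_assoc, hrun, Prod.fst_add, Prod.snd_add] using hws _ hφu
  · rintro _ ⟨n, rfl⟩
    obtain ⟨c, hc, u, hu, rfl⟩ := hC n
    exact Set.mem_biUnion hc ⟨u, hu, rfl⟩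

theorem flattable_of_isLinSet {L : Set (NVec d × NVec d)} (hL : IsLinSet L)
    (h : ∀ q ∈ L, V.Reach q.1 q.2) : V.Flattable L := by
  obtain ⟨b, r, p, rfl⟩ := hL
  let φ : (Fin r → ℕ) →+ NVec d × NVec d := (Fintype.linearCombination ℕ p).toAddMonoidHom
  refine (flattable_range_add b φ fun n => h _ ⟨n, rfl⟩).mono ?_
  rintro _ ⟨n, rfl⟩
  exact ⟨n, rfl⟩

theorem flattable_of_isSemilinSet {S : Set (NVec d × NVec d)} (hS : IsSemilinSet S)
    (h : ∀ q ∈ S, V.Reach q.1 q.2) : V.Flattable S := by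
  obtain ⟨n, L, hL, rfl⟩ := hS
  rw [← Set.biUnion_univ]
  exact flattable_biUnion Set.finite_univ fun i _ =>
    flattable_of_isLinSet (hL i) fun q hq => h q (Set.mem_iUnion_of_mem i hq)

end PVAS

/-- If the reachability relation of a PVAS is semilinear (viewed as a
subset of `ℕ^d × ℕ^d ≅ ℕ^{2d}`), then it is flattable: there are finitely many words
`w₁,…,w_r` of edges with `→_V* = →_{w₁}* ∘ … ∘ →_{w_r}*`. -/
theorem pvas_semilinear_reach_flattable {d : ℕ} (V : PVAS d)
    (hsl : IsSemilinSet {p : NVec d × NVec d | V.Reach p.1 p.2}) :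
    ∃ ws : List (List V.E),
      ∀ x y : NVec d,
        V.Reach x y ↔
          compList (ws.map fun w => Relation.ReflTransGen (V.StepWord w)) x y := by
  obtain ⟨ws, hws⟩ := PVAS.flattable_of_isSemilinSet hsl fun _ hq => hq
  exact ⟨ws, fun x y => ⟨hws (x, y), PVAS.Flat.reach⟩⟩
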